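/- arXiv:2006.01466 — 2 statements merged into one kernel-verified Lean document; each statement's English description precedes it below -/
import Mathlib

section
/- There exists a subgroup H of Aut(X_n^ℤ, σ_n) such that every element of Aut(X_n^ℤ, σ_n) can be written uniquely as σ_n^i h with i ∈ ℤ and h ∈ H (equivalently, the central extension 1 → ⟨σ_n⟩ → Aut(X_n^ℤ, σ_n) → Aut(X_n^ℤ, σ_n)/⟨σ_n⟩ → 1 splits, so that Aut(X_n^ℤ, σ_n) is isomorphic to ℤ × Aut(X_n^ℤ, σ_n)/⟨σ_n⟩) if and only if n is not of the form m^k for integers m ≥ 2 and k ≥ 2. -/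
/-!
The shift is central, so a complement of `⟨σ⟩` exists exactly when some homomorphism from the
automorphism group to `ℤ` sends `σ` to `±1`; the complement is its kernel.  Write `N = n + 2`.

If `N = m ^ k` with `k ≥ 2`, reading letters as words of length `k` over `m` letters turns `σ`
into the `k`-th power of a shift, so `σ` has a `k`-th root `τ` (`exists_root`).  Writing
`τ = σ ^ i ∘ h` with `h` in a complement gives `σ = σ ^ (i * k) ∘ h ^ k`, so `i * k = 1` by
uniqueness, which is impossible.

If `N` is not a proper power, the homomorphism comes from the scaling factor of an automorphism
`f` (its image under the dimension group representation), which is described by counting.  The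
sequences with a prescribed left half, to the left of `0`, are divided according to the part of
`f x` to the left of `s`; for large `s` the number `d` of pieces is finite and does not depend on
the prescribed left half (`exists_hasIndex`), because `f` and its inverse are block codes
(`exists_hasRadius`) and so replacing one left half by another respects the division.  The
rational `d / N ^ s` does not depend on `s` (`HasDeg.unique`), is multiplicative in `f`
(`HasDeg.comp`), and equals `N⁻¹` at `σ` (`hasDeg_shiftZ`).  As `N` is not a proper power, its
prime exponents are coprime, and by Bézout an integer combination of `p`-adic valuations sends `N`
to `1` (`exists_weight_eq_one`).  Composing the two maps gives the required homomorphism.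
-/

/-!
Common definitions: transducers over a finite alphabet, strong synchronization,
cores, ω-equivalence, minimal representatives, the monoids `M_n`, `SL_n`, `SO_n`,
the groups `O_n`, `L_n`, annotations, and the two-sided full shift.

Throughout, the alphabet is `Fin (n + 2)`, i.e. an alphabet of size `n + 2 ≥ 2`.
-/

namespace ShiftPaper

/-- The alphabet with `n + 2` letters. -/
abbrev A (n : ℕ) : Type := Fin (n + 2)

/-- Finite words over the alphabet. -/
abbrev Word (n : ℕ) : Type := List (A n)

/-- A transducer over the alphabet `A n`: a finite nonempty set of states together with a
transition function `tr` and an output function `out` (possibly asynchronous). -/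
structure Transducer (n : ℕ) where
  Q : Type
  fin : Finite Q
  ne : Nonempty Q
  tr : A n → Q → Q
  out : A n → Q → Word n

variable {n : ℕ}

instance (T : Transducer n) : Finite T.Q := T.fin
instance (T : Transducer n) : Nonempty T.Q := T.ne

/-- Extended transition function, reading a finite word from left to right. -/
def dsts (T : Transducer n) : Word n → T.Q → T.Q
  | [], q => q
  | a :: w, q => dsts T w (T.tr a q)

/-- Extended output function along a finite word. -/
def outs (T : Transducer n) : Word n → T.Q → Word n
  | [], _ => []
  | a :: w, q => T.out a q ++ outs T w (T.tr a q)

/-- Every (nonempty) circuit in the transducer has nonempty output. -/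
def CircuitsNonempty (T : Transducer n) : Prop :=
  ∀ (q : T.Q) (w : Word n), w ≠ [] → dsts T w q = q → outs T w q ≠ []

/-- `T` is synchronizing at level `k`: the state reached after reading any word of
length `k` does not depend on the starting state. -/
def SyncAt (T : Transducer n) (k : ℕ) : Prop :=
  ∀ w : Word n, w.length = k → ∀ p q : T.Q, dsts T w p = dsts T w q

/-- `T` is strongly synchronizing: synchronizing at some level. -/
def StronglySync (T : Transducer n) : Prop := ∃ k, SyncAt T k

/-- The minimal synchronizing level (junk value `0` if `T` is not strongly synchronizing). -/
noncomputable def syncLevel (T : Transducer n) : ℕ := by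
  classical
  exact if h : StronglySync T then Nat.find h else 0

/-- The infinite output stream produced from state `q` on reading the infinite input `x`
(the map `h_q`).  (Well defined on transducers all of whose circuits have nonempty
output; junk values otherwise.) -/
noncomputable def hmap (T : Transducer n) (q : T.Q) (x : ℕ → A n) : ℕ → A n := fun m => by
  classical
  exact if h : ∃ k, m < (outs T ((List.range k).map x) q).length then
    (outs T ((List.range h.choose).map x) q).getD m default
  else default

/-- ω-equality of transducers: a bijection of the state sets under which corresponding
states induce the same maps on infinite sequences. -/
def OmegaEq (T U : Transducer n) : Prop :=
  ∃ f : T.Q ≃ U.Q, ∀ q, hmap T q = hmap U (f q)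

/-- The setoid on states given by ω-equivalence of states. -/
def omegaSetoid (T : Transducer n) : Setoid T.Q :=
  ⟨fun p q => hmap T p = hmap T q, ⟨fun _ => rfl, fun h => h.symm, fun h h' => h.trans h'⟩⟩

/-- The transducer obtained by identifying ω-equivalent states. -/
noncomputable def quotT (T : Transducer n) : Transducer n where
  Q := Quotient (omegaSetoid T)
  fin := Finite.of_surjective (Quotient.mk (omegaSetoid T))
    fun c => ⟨Quotient.out c, Quotient.out_eq c⟩
  ne := ⟨Quotient.mk (omegaSetoid T) (Classical.choice T.ne)⟩
  tr := fun a c => Quotient.mk (omegaSetoid T) (T.tr a (Quotient.out c))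
  out := fun a c => T.out a (Quotient.out c)

/-- `q` is a state of the core of `T`: it is forced by some word whose length is a
synchronizing level of `T`. -/
def CoreState (T : Transducer n) (q : T.Q) : Prop :=
  ∃ (k : ℕ) (w : Word n), SyncAt T k ∧ w.length = k ∧ ∀ p, dsts T w p = q

/-- `T` is core: it equals its core. -/
def IsCore (T : Transducer n) : Prop := ∀ q : T.Q, CoreState T q

/-- Auxiliary predicate used to make the core construction total. -/
def CoreStateE (T : Transducer n) (q : T.Q) : Prop :=
  CoreState T q ∨ ∀ p, ¬ CoreState T p

/-- The core of `T` (as a transducer). -/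
noncomputable def coreT (T : Transducer n) : Transducer n where
  Q := {q : T.Q // CoreStateE T q}
  fin := Subtype.finite
  ne := by
    classical
    by_cases h : ∀ p, ¬ CoreState T p
    · exact ⟨⟨Classical.choice T.ne, Or.inr h⟩⟩
    · push_neg at h
      obtain ⟨p, hp⟩ := h
      exact ⟨⟨p, Or.inl hp⟩⟩
  tr := fun a q => by
    classical
    exact if h : CoreStateE T (T.tr a q.1) then ⟨T.tr a q.1, h⟩ else q
  out := fun a q => T.out a q.1

/-- There exist two inputs whose outputs from `q` disagree at position `j`. -/
def Disagree (T : Transducer n) (q : T.Q) (j : ℕ) : Prop :=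
  ∃ x y : ℕ → A n, hmap T q x j ≠ hmap T q y j

/-- The extent of incomplete response of `q` (the length of `Λ(ε,q)`) is finite. -/
def FiniteExtent (T : Transducer n) (q : T.Q) : Prop := ∃ j, Disagree T q j

/-- The extent of incomplete response `|Λ(ε,q)|` of the state `q`
(junk value `0` when it is infinite). -/
noncomputable def extentLen (T : Transducer n) (q : T.Q) : ℕ := by
  classical
  exact if h : FiniteExtent T q then Nat.find h else 0

/-- The word `Λ(ε,q)`: the greatest common prefix of all outputs from `q`. -/
noncomputable def extentWord (T : Transducer n) (q : T.Q) : Word n :=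
  (List.range (extentLen T q)).map (hmap T q fun _ => default)

/-- `T` has no states of incomplete response (`Λ(ε,q) = ε` for every state `q`). -/
def NoIncomplete (T : Transducer n) : Prop := ∀ q : T.Q, Disagree T q 0

/-- No two distinct states of `T` are ω-equivalent. -/
def WeaklyMinimal (T : Transducer n) : Prop :=
  ∀ p q : T.Q, hmap T p = hmap T q → p = q

/-- The Lipschitz condition (SL3): around any circuit the output is as long as the input. -/
def SL3 (T : Transducer n) : Prop :=
  ∀ (q : T.Q) (Γ : Word n), dsts T Γ q = q → (outs T Γ q).length = Γ.length

/-- `T` is synchronous: it writes exactly one letter for each letter read. -/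
def Synchronous (T : Transducer n) : Prop :=
  ∀ (a : A n) (q : T.Q), (T.out a q).length = 1

/-- Boolean lexicographic comparison of words. -/
def lexLtB : Word n → Word n → Bool
  | [], [] => false
  | [], _ :: _ => true
  | _ :: _, [] => false
  | a :: u, b :: v => if a < b then true else if b < a then false else lexLtB u v

/-- The lexicographically least rotation of a word. -/
def minimalRot (w : Word n) : Word n :=
  ((List.range w.length).map fun i => w.rotate i).foldl
    (fun acc r => if lexLtB r acc then r else acc) w

/-- A nonempty word is prime if it is not a power of a strictly shorter word. -/
def IsPrime (w : Word n) : Prop :=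
  w ≠ [] ∧ ∀ (u : Word n) (k : ℕ), w = (List.replicate k u).flatten → w.length ≤ u.length

/-- `v` is a rotation of `u`. -/
def RotEq (u v : Word n) : Prop := ∃ i : ℕ, v = u.rotate i

/-- The prime word of which the (eventually constant single) image point of `T` is a power
(used for the degenerate transducers `Z_x`; junk values otherwise). -/
noncomputable def periodicRoot (T : Transducer n) : Word n := by
  classical
  exact
    if hp : ∃ m, 0 < m ∧ ∀ j, hmap T (Classical.choice T.ne) (fun _ => default) (j + m) =
        hmap T (Classical.choice T.ne) (fun _ => default) j
    then (List.range (Nat.find hp)).map (hmap T (Classical.choice T.ne) fun _ => default)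
    else [default]

/-- Remove the incomplete response from the states of `T`: replace the output `λ(a,q)` by
`Λ(a,q) - Λ(ε,q)`.  (In the degenerate case where the extents of incomplete response are
infinite, all outputs are replaced by the minimal rotation of the prime root of the unique
image point, so that minimising produces the transducer `Z_x` of the paper.) -/
noncomputable def removeIncomplete (T : Transducer n) : Transducer n where
  Q := T.Q
  fin := T.fin
  ne := T.ne
  tr := T.tr
  out := fun a q => by
    classical
    exact if ∀ p : T.Q, FiniteExtent T p then
      (T.out a q ++ extentWord T (T.tr a q)).drop (extentLen T q)
    else minimalRot (periodicRoot T)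

/-- The minimal representative `[T]` of a strongly synchronizing core transducer `T`:
remove incomplete response, take the core, and identify ω-equivalent states. -/
noncomputable def minRep (T : Transducer n) : Transducer n :=
  quotT (coreT (removeIncomplete T))

/-- The single state transducer `Z_x` which outputs `x` on every input letter. -/
def Zword (x : Word n) : Transducer n where
  Q := PUnit
  fin := inferInstance
  ne := ⟨PUnit.unit⟩
  tr := fun _ q => q
  out := fun _ _ => x

/-- The single state identity transducer. -/
def oneT : Transducer n where
  Q := PUnit
  fin := inferInstance
  ne := ⟨PUnit.unit⟩
  tr := fun _ q => q
  out := fun a _ => [a]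

/-- The product transducer `T * U`: the outputs of `T` are processed by `U`. -/
noncomputable def prodT (T U : Transducer n) : Transducer n where
  Q := T.Q × U.Q
  fin := inferInstance
  ne := ⟨⟨Classical.choice T.ne, Classical.choice U.ne⟩⟩
  tr := fun a p => (T.tr a p.1, dsts U (T.out a p.1) p.2)
  out := fun a p => outs U (T.out a p.1) p.2

/-- The product in `M_n`: the minimal representative of the core of `T * U`. -/
noncomputable def mulT (T U : Transducer n) : Transducer n :=
  minRep (coreT (prodT T U))

/-- Membership in the monoid `M_n` of minimal, strongly synchronizing, core transducers
(a transducer is minimal if it is core, has no states of incomplete response and no two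
distinct ω-equivalent states, or it is one of the degenerate transducers `Z_x` for a prime
word `x` which is least in its rotation class). -/
def MnMem (T : Transducer n) : Prop :=
  CircuitsNonempty T ∧ StronglySync T ∧ IsCore T ∧
    ((NoIncomplete T ∧ WeaklyMinimal T) ∨
      ∃ x : Word n, IsPrime x ∧ minimalRot x = x ∧ OmegaEq T (Zword x))

/-- Membership in the monoid `SL_n`: elements of `M_n` satisfying the Lipschitz condition. -/
def SLnMem (T : Transducer n) : Prop := MnMem T ∧ SL3 T

/-- Membership in the monoid `SO_n`: elements of `M_n` all of whose states induce injective
maps with clopen image. -/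
def SOnMem (T : Transducer n) : Prop :=
  MnMem T ∧ ∀ q : T.Q, Function.Injective (hmap T q) ∧ IsClopen (Set.range (hmap T q))

/-- Membership in the group `O_n`: invertible elements of `SO_n` (with inverse in `SO_n`);
equality in `M_n` is ω-equality. -/
def OnMem (T : Transducer n) : Prop :=
  SOnMem T ∧ ∃ U : Transducer n, SOnMem U ∧ OmegaEq (mulT T U) oneT ∧ OmegaEq (mulT U T) oneT

/-- Membership in the group `L_n = O_n ∩ SL_n`. -/
def LnMem (T : Transducer n) : Prop := OnMem T ∧ SL3 T

/-- Membership in the monoid `\widetilde{P}_n` of weakly minimal, synchronous, strongly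
synchronizing core transducers. -/
def PtildeMem (T : Transducer n) : Prop :=
  CircuitsNonempty T ∧ StronglySync T ∧ IsCore T ∧ Synchronous T ∧ WeaklyMinimal T

/-- The product in `\widetilde{P}_n`: take the product transducer, identify ω-equivalent
states and take the core. -/
noncomputable def ptildeMul (P R : Transducer n) : Transducer n :=
  coreT (quotT (prodT P R))

/-- An annotation of (a strongly synchronizing core transducer satisfying the Lipschitz
condition) `T`. -/
def Annotation (T : Transducer n) (α : T.Q → ℤ) : Prop :=
  ∀ (q : T.Q) (Γ : Word n),
    α (dsts T Γ q) = α q + ((outs T Γ q).length : ℤ) - (Γ.length : ℤ)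

/-! ### The two-sided full shift -/

/-- The space of bi-infinite sequences over the alphabet `A n`. -/
abbrev FullShift (n : ℕ) : Type := ℤ → A n

/-- The `i`-th power of the shift map: `(shiftZ i x) j = x (j - i)`.
The shift `σ` itself is `shiftZ 1`. -/
def shiftZ (i : ℤ) (x : FullShift n) : FullShift n := fun j => x (j - i)

/-- The monoid of endomorphisms of the shift dynamical system: continuous maps on the
space of bi-infinite sequences commuting with the shift. -/
def EndShift (n : ℕ) : Type :=
  {f : FullShift n → FullShift n // Continuous f ∧ ∀ x, f (shiftZ 1 x) = shiftZ 1 (f x)}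

/-- The group of automorphisms of the shift dynamical system: homeomorphisms of the
space of bi-infinite sequences commuting with the shift. -/
def AutShift (n : ℕ) : Type :=
  {f : FullShift n → FullShift n // Continuous f ∧ (∀ x, f (shiftZ 1 x) = shiftZ 1 (f x)) ∧
    ∃ g : FullShift n → FullShift n, Continuous g ∧ (∀ x, g (f x) = x) ∧ ∀ x, f (g x) = x}

/-- The window `x_{i-k} … x_{i-1}` of a bi-infinite sequence. -/
def window (x : FullShift n) (i : ℤ) (k : ℕ) : Word n :=
  (List.range k).map fun j => x (i - (k : ℤ) + (j : ℤ))

/-- The state of `L` forced by the window `x_{i-k} … x_{i-1}`. -/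
noncomputable def forced (L : Transducer n) (k : ℕ) (x : FullShift n) (i : ℤ) : L.Q :=
  dsts L (window x i k) (Classical.choice L.ne)

/-- The output word written while processing the letter `x i`. -/
noncomputable def outAt (L : Transducer n) (k : ℕ) (x : FullShift n) (i : ℤ) : Word n :=
  L.out (x i) (forced L k x i)

/-- The defining specification of the map `(L, α) : X_n^ℤ → X_n^ℤ` induced by an annotated
transducer: for each index `i`, with `q` the state forced by `x_{i-k} … x_{i-1}` and
`w = λ(x_i, q)`, the word `w` occupies the coordinates `i + α q, …, i + α q + |w| - 1`
of the image sequence `y`. -/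
def SpecAt (L : Transducer n) (α : L.Q → ℤ) (k : ℕ) (x y : FullShift n) : Prop :=
  ∀ (i : ℤ) (j : ℕ), j < (outAt L k x i).length →
    y (i + α (forced L k x i) + (j : ℤ)) = (outAt L k x i).getD j default

/-- The map `(L, α) : X_n^ℤ → X_n^ℤ` induced by an annotated transducer. -/
noncomputable def inducedMap (L : Transducer n) (α : L.Q → ℤ) (k : ℕ) :
    FullShift n → FullShift n := fun x m => by
  classical
  exact if h : ∃ p : ℤ × ℕ, p.2 < (outAt L k x p.1).length ∧
      p.1 + α (forced L k x p.1) + (p.2 : ℤ) = m then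
    (outAt L k x h.choose.1).getD h.choose.2 default
  else default

/-- The map `κ` from the states of `T` to the states of its minimal representative. -/
noncomputable def kappa (T : Transducer n) (q : T.Q) : (minRep T).Q := by
  classical
  exact Quotient.mk (omegaSetoid (coreT (removeIncomplete T)))
    (if h : CoreStateE (removeIncomplete T) q then
      (⟨q, h⟩ : (coreT (removeIncomplete T)).Q)
    else Classical.choice (coreT (removeIncomplete T)).ne)

/-- The annotation `\overline{α + β}` of the product `LM` in `SL_n`: its value at the
state `κ (s, t)` is `α s + β t + |Λ(ε, (s,t))|`, the extent of incomplete response being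
computed in `core (L * M)`. -/
noncomputable def annProd (L M : Transducer n) (α : L.Q → ℤ) (β : M.Q → ℤ) :
    (mulT L M).Q → ℤ := fun c =>
  α (Quotient.out c).1.1.1 + β (Quotient.out c).1.1.2 +
    (extentLen (coreT (prodT L M)) (Quotient.out c).1 : ℤ)

/-- The set `ASL_n` of annotated transducers: pairs of a transducer and an integer-valued
function on its states. -/
def ASLPair (n : ℕ) := Σ T : Transducer n, T.Q → ℤ

/-- Membership in `ASL_n`: either the transducer is in `SL_n` with no states of incomplete
response and the function is an annotation of it, or it is a degenerate `Z_a` for a letter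
`a` (whose `annotation ∞` we model by allowing an arbitrary function). -/
def ASLMem (p : ASLPair n) : Prop :=
  (SLnMem p.1 ∧ NoIncomplete p.1 ∧ Annotation p.1 p.2) ∨ ∃ a : A n, OmegaEq p.1 (Zword [a])

/-- Equality in `ASL_n`: ω-equality of the transducers matching up the annotations, with
the two elements possibly both being the degenerate `(Z_a, ∞)` for the same letter `a`. -/
def ASLEq (p q : ASLPair n) : Prop :=
  (∃ f : p.1.Q ≃ q.1.Q, (∀ s, hmap p.1 s = hmap q.1 (f s)) ∧ ∀ s, q.2 (f s) = p.2 s) ∨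
    ∃ a : A n, OmegaEq p.1 (Zword [a]) ∧ OmegaEq q.1 (Zword [a])

/-- The product on `ASL_n`: `(L, α)(M, β) = (LM, \overline{α + β})`. -/
noncomputable def ASLmul (p q : ASLPair n) : ASLPair n :=
  ⟨mulT p.1 q.1, annProd p.1 q.1 p.2 q.2⟩

/-- The identity `(1, 0)` of `ASL_n`. -/
def ASLone : ASLPair n := ⟨oneT, fun _ => 0⟩

/-- Membership in `AL_n`: annotated elements of `L_n`. -/
def ALMem (p : ASLPair n) : Prop := LnMem p.1 ∧ Annotation p.1 p.2

/-- The element `([P], α)` of `ASL_n` with `α ((q) κ) = i + |Λ(ε, q)|`, associated to the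
endomorphism `σ^i ∘ f_P`. -/
noncomputable def phiPair (P : Transducer n) (i : ℤ) : ASLPair n :=
  ⟨minRep P, fun c => i + (extentLen P (Quotient.out c).1 : ℤ)⟩

/-- The unique state at the base of a circuit labelled `Γ` (junk value if there is none). -/
noncomputable def qcirc (T : Transducer n) (Γ : Word n) : T.Q := by
  classical
  exact if h : ∃ q, dsts T Γ q = q then h.choose else Classical.choice T.ne

/-- The prime root of a word: the prime word of which `w` is a power
(junk value `w` if there is none). -/
noncomputable def primeRoot (w : Word n) : Word n := by
  classical
  exact if h : ∃ u : Word n, IsPrime u ∧ ∃ k, w = (List.replicate k u).flatten then h.choose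
  else w

/-- The action of `T ∈ M_n` on (rotation classes of) prime words: `Γ` is sent to the prime
word of which `λ(Γ, q_Γ)` is a power, where `q_Γ` is the unique state with a circuit
labelled `Γ` based at it. -/
noncomputable def PiAct (T : Transducer n) (Γ : Word n) : Word n :=
  primeRoot (outs T Γ (qcirc T Γ))

/-- The cylinder set of one-sided infinite sequences with prefix `ν`. -/
def Cyl (ν : Word n) : Set (ℕ → A n) :=
  {x | ∀ (j : ℕ) (h : j < ν.length), x j = ν.get ⟨j, h⟩}

/-- `m_q = |B(q)|`: the least cardinality of a finite set of words whose cylinders are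
contained in, and together cover, the image of `h_q`. -/
noncomputable def mq (T : Transducer n) (q : T.Q) : ℕ :=
  sInf {m : ℕ | ∃ S : Finset (Word n), S.card = m ∧
    (∀ ν ∈ S, Cyl ν ⊆ Set.range (hmap T q)) ∧
    (⋃ ν ∈ S, Cyl ν) = Set.range (hmap T q)}

/-- The signature homomorphism `sig : O_n → (ℤ/(n-1))^×`, as an element of `ℤ/(n-1)`
(for our alphabet of size `n + 2`, the modulus is `n + 1`). -/
noncomputable def sigT (T : Transducer n) : ZMod (n + 1) :=
  (mq T (Classical.choice T.ne) : ZMod (n + 1))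


/-! ### Indices of equivalence relations -/

/-- The relation `F` refines the equivalence relation `E`, and every `E`-class consists of
exactly `d` classes of `F`.  This is encoded by a labelling of the points by `Fin d` which
distinguishes the `F`-classes inside each `E`-class and takes every value on each `E`-class. -/
def HasIndex {X : Type} (E F : X → X → Prop) (d : ℕ) : Prop :=
  ∃ φ : X → Fin d, (∀ x y, F x y ↔ E x y ∧ φ x = φ y) ∧ ∀ x c, ∃ y, E x y ∧ φ y = c

lemma HasIndex.of_label {X ι : Type} [Fintype ι] {E F : X → X → Prop} (φ : X → ι)
    (h : ∀ x y, F x y ↔ E x y ∧ φ x = φ y) (h' : ∀ x c, ∃ y, E x y ∧ φ y = c) :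
    HasIndex E F (Fintype.card ι) := by
  refine ⟨fun x => Fintype.equivFin ι (φ x), fun x y => by simp [h], fun x c => ?_⟩
  obtain ⟨y, hy, hc⟩ := h' x ((Fintype.equivFin ι).symm c)
  exact ⟨y, hy, by simp [hc]⟩

lemma HasIndex.mul {X : Type} {E F G : X → X → Prop} {d e : ℕ} (hE : Equivalence E)
    (h₁ : HasIndex E F d) (h₂ : HasIndex F G e) : HasIndex E G (d * e) := by
  obtain ⟨φ, hφ, hφs⟩ := h₁
  obtain ⟨ψ, hψ, hψs⟩ := h₂
  have := HasIndex.of_label (E := E) (F := G) (fun x => (φ x, ψ x))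
    (fun x y => by rw [hψ, hφ, Prod.mk.injEq, and_assoc]) (by
      rintro x ⟨c, c'⟩
      obtain ⟨y, hy, hc⟩ := hφs x c
      obtain ⟨z, hz, hc'⟩ := hψs y c'
      obtain ⟨hyz, hφyz⟩ := (hφ y z).1 hz
      exact ⟨z, hE.trans hy hyz, by rw [hc', ← hφyz, hc]⟩)
  simpa using this

lemma HasIndex.le {X : Type} [Nonempty X] {E F : X → X → Prop} {d e : ℕ} (hE : Equivalence E)
    (h₁ : HasIndex E F d) (h₂ : HasIndex E F e) : d ≤ e := by
  obtain ⟨φ, hφ, hφs⟩ := h₁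
  obtain ⟨ψ, hψ, -⟩ := h₂
  obtain ⟨x⟩ := ‹Nonempty X›
  choose y hy hyc using hφs x
  have hinj : Function.Injective fun c => ψ (y c) := by
    intro c c' hcc
    have hE' : E (y c) (y c') := hE.trans (hE.symm (hy c)) (hy c')
    rw [← hyc c, ← hyc c']
    exact ((hφ _ _).1 ((hψ _ _).2 ⟨hE', hcc⟩)).2
  simpa using Fintype.card_le_of_injective _ hinj

lemma HasIndex.unique {X : Type} [Nonempty X] {E F : X → X → Prop} {d e : ℕ}
    (hE : Equivalence E) (h₁ : HasIndex E F d) (h₂ : HasIndex E F e) : d = e :=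
  le_antisymm (h₁.le hE h₂) (h₂.le hE h₁)

lemma HasIndex.ne_zero {X : Type} [Nonempty X] {E F : X → X → Prop} {d : ℕ}
    (h : HasIndex E F d) : d ≠ 0 := by
  rintro rfl
  obtain ⟨φ, -⟩ := h
  obtain ⟨x⟩ := ‹Nonempty X›
  exact (φ x).elim0

lemma HasIndex.comap {X Y : Type} {E F : X → X → Prop} {d : ℕ} (h : HasIndex E F d)
    {f : Y → X} (hf : Function.Surjective f) :
    HasIndex (fun x y => E (f x) (f y)) (fun x y => F (f x) (f y)) d := by
  obtain ⟨φ, hφ, hφs⟩ := h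
  refine ⟨fun x => φ (f x), fun x y => hφ _ _, fun x c => ?_⟩
  obtain ⟨y, hy, hc⟩ := hφs (f x) c
  obtain ⟨z, rfl⟩ := hf y
  exact ⟨z, hy, hc⟩

/-! ### Agreement of bi-infinite sequences on left half-lines -/

/-- The sequences `x` and `y` agree at all coordinates `i < a`. -/
def LeftEq (a : ℤ) (x y : FullShift n) : Prop := ∀ i < a, x i = y i

lemma leftEq_equivalence (a : ℤ) : Equivalence (LeftEq (n := n) a) :=
  ⟨fun _ _ _ => rfl, fun h i hi => (h i hi).symm, fun h h' i hi => (h i hi).trans (h' i hi)⟩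

lemma hasIndex_leftEq (a : ℤ) (k : ℕ) :
    HasIndex (LeftEq (n := n) a) (LeftEq (a + k)) ((n + 2) ^ k) := by
  have := HasIndex.of_label (E := LeftEq (n := n) a) (F := LeftEq (a + k))
    (fun x (j : Fin k) => x (a + (j : ℕ))) (by
      intro x y
      constructor
      · intro h
        exact ⟨fun i hi => h i (by omega), funext fun j => h _ (by have := j.2; omega)⟩
      · rintro ⟨h, h'⟩ i hi
        by_cases hia : i < a
        · exact h i hia
        · have := congrFun h' ⟨(i - a).toNat, by omega⟩
          have e : a + ((i - a).toNat : ℤ) = i := by omega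
          simpa only [e] using this) (by
      intro x c
      refine ⟨fun i => if h : a ≤ i ∧ i < a + k then c ⟨(i - a).toNat, by omega⟩ else x i,
        fun i hi => ?_, funext fun j => ?_⟩
      · have hn : ¬(a ≤ i ∧ i < a + k) := by omega
        beta_reduce
        rw [dif_neg hn]
      · have := j.2
        refine (dif_pos (by omega)).trans (congrArg c (Fin.ext ?_))
        simp)
  simpa using this

lemma shiftZ_shiftZ (i j : ℤ) (x : FullShift n) : shiftZ i (shiftZ j x) = shiftZ (i + j) x := by
  funext t
  simp only [shiftZ]
  congr 1
  ring

lemma shiftZ_zero (x : FullShift n) : shiftZ 0 x = x := by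
  funext t
  simp [shiftZ]

lemma shiftZ_injective (i : ℤ) : Function.Injective (shiftZ (n := n) i) := by
  intro x y h
  have := congrArg (shiftZ (-i)) h
  simpa [shiftZ_shiftZ, shiftZ_zero] using this

lemma shiftZ_surjective (i : ℤ) : Function.Surjective (shiftZ (n := n) i) := fun x =>
  ⟨shiftZ (-i) x, by simp [shiftZ_shiftZ, shiftZ_zero]⟩

lemma continuous_shiftZ (i : ℤ) : Continuous (shiftZ (n := n) i) :=
  continuous_pi fun j => continuous_apply (j - i)

lemma leftEq_shiftZ (a i : ℤ) (x y : FullShift n) :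
    LeftEq a (shiftZ i x) (shiftZ i y) ↔ LeftEq (a - i) x y := by
  constructor
  · intro h j hj
    have := h (j + i) (by omega)
    simpa [shiftZ] using this
  · intro h j hj
    exact h (j - i) (by omega)

lemma comm_shiftZ {f : FullShift n → FullShift n} (hf : ∀ x, f (shiftZ 1 x) = shiftZ 1 (f x))
    (i : ℤ) (x : FullShift n) : f (shiftZ i x) = shiftZ i (f x) := by
  induction i using Int.induction_on generalizing x with
  | zero => simp [shiftZ_zero]
  | succ k ih => rw [← shiftZ_shiftZ, ih, hf, shiftZ_shiftZ]
  | pred k ih =>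
    apply shiftZ_injective 1
    rw [← hf, shiftZ_shiftZ, shiftZ_shiftZ, show (1 : ℤ) + (-(k : ℤ) - 1) = -k by ring, ih]

/-! ### Block codes -/

/-- The value of `f x` at `i` depends only on the coordinates of `x` in `[i - r, i + r]`. -/
def HasRadius (f : FullShift n → FullShift n) (r : ℕ) : Prop :=
  ∀ (x y : FullShift n) (i : ℤ), (∀ j, i - r ≤ j → j ≤ i + r → x j = y j) → f x i = f y i

lemma HasRadius.mono {f : FullShift n → FullShift n} {r s : ℕ} (h : HasRadius f r) (hrs : r ≤ s) :
    HasRadius f s :=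
  fun x y i hxy => h x y i fun j h₁ h₂ => hxy j (by omega) (by omega)

/-- The Curtis–Hedlund–Lyndon theorem: a continuous map commuting with the shift is a
sliding block code. -/
lemma exists_hasRadius {f : FullShift n → FullShift n} (hc : Continuous f)
    (hf : ∀ x, f (shiftZ 1 x) = shiftZ 1 (f x)) : ∃ r, HasRadius f r := by
  have hloc : ∀ x : FullShift n, ∃ r : ℕ, ∀ y : FullShift n,
      (∀ j : ℤ, -(r : ℤ) ≤ j → j ≤ r → y j = x j) → f y 0 = f x 0 := by
    intro x
    have ho : IsOpen {y : FullShift n | f y 0 = f x 0} :=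
      (isOpen_discrete {f x 0}).preimage ((continuous_apply (0 : ℤ)).comp hc)
    obtain ⟨I, u, hu, hsub⟩ := isOpen_pi_iff.1 ho x rfl
    refine ⟨I.sup Int.natAbs, fun y hy => hsub fun j hj => ?_⟩
    have : j.natAbs ≤ I.sup Int.natAbs := Finset.le_sup (f := Int.natAbs) hj
    rw [hy j (by omega) (by omega)]
    exact (hu j hj).2
  choose r hr using hloc
  have hnhds : ∀ x ∈ (Set.univ : Set (FullShift n)),
      {y : FullShift n | ∀ j ∈ Set.Icc (-(r x : ℤ)) (r x), y j = x j} ∈ nhds x := by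
    intro x _
    refine IsOpen.mem_nhds ?_ fun j _ => rfl
    have : {y : FullShift n | ∀ j ∈ Set.Icc (-(r x : ℤ)) (r x), y j = x j} =
        (Set.Icc (-(r x : ℤ)) (r x)).pi fun j => {x j} := by
      ext y; simp [Set.mem_pi]
    rw [this]
    exact isOpen_set_pi (Set.finite_Icc _ _) fun j _ => isOpen_discrete _
  obtain ⟨t, ht⟩ := isCompact_univ.elim_nhds_subcover' (fun x _ =>
    {y : FullShift n | ∀ j ∈ Set.Icc (-(r x : ℤ)) (r x), y j = x j}) hnhds
  refine ⟨t.sup fun x => r x.1, fun x y i hxy => ?_⟩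
  have key : ∀ x y : FullShift n, (∀ j : ℤ, -((t.sup fun x => r x.1 : ℕ) : ℤ) ≤ j →
      j ≤ (t.sup fun x => r x.1 : ℕ) → x j = y j) → f x 0 = f y 0 := by
    intro x y hxy
    have hx := ht (Set.mem_univ x)
    obtain ⟨z, hz, hxz⟩ := Set.mem_iUnion₂.1 hx
    have hle : r z.1 ≤ t.sup fun x => r x.1 := Finset.le_sup (f := fun x => r x.1) hz
    rw [hr z.1 x fun j h₁ h₂ => hxz j ⟨h₁, h₂⟩, hr z.1 y fun j h₁ h₂ => ?_]
    rw [← hxy j (by omega) (by omega)]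
    exact hxz j ⟨h₁, h₂⟩
  have := key (shiftZ (-i) x) (shiftZ (-i) y) fun j h₁ h₂ => by
    simpa [shiftZ] using hxy (j + i) (by omega) (by omega)
  simpa [comm_shiftZ hf, shiftZ] using this

lemma HasRadius.leftEq {f : FullShift n → FullShift n} {r : ℕ} (h : HasRadius f r) {a : ℤ}
    {x y : FullShift n} (hxy : LeftEq a x y) : LeftEq (a - r) (f x) (f y) :=
  fun i hi => h x y i fun j _ _ => hxy j (by omega)

/-- For an invertible block code `f`, agreement of `f x` and `f y` far enough to the right is
unaffected when the common left half of `x` and `y` is replaced by another one. -/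
lemma leftEq_of_change_left {f g : FullShift n → FullShift n} {r : ℕ} (hf : HasRadius f r)
    (hg : HasRadius g r) (hgf : ∀ x, g (f x) = x) {s : ℤ} (hs : 3 * r ≤ s)
    {x y x' y' : FullShift n} (hx : ∀ i, 0 ≤ i → x i = x' i) (hy : ∀ i, 0 ≤ i → y i = y' i)
    (hxy' : LeftEq 0 x' y') (h : LeftEq s (f x) (f y)) : LeftEq s (f x') (f y') := by
  have h₁ : LeftEq (s - r) x y := by
    have := hg.leftEq h
    rwa [hgf, hgf] at this
  have h₂ : LeftEq (s - r) x' y' := by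
    intro i hi
    by_cases h0 : i < 0
    · exact hxy' i h0
    · rw [← hx i (by omega), ← hy i (by omega)]
      exact h₁ i hi
  intro i hi
  by_cases h0 : i < s - r - r
  · exact hf.leftEq h₂ i h0
  · have hpos : (r : ℤ) ≤ i := by omega
    -- the window of radius `r` around `i` lies in the half-line where `x = x'` and `y = y'`
    rw [← hf x x' i fun j _ _ => hx j (by omega), ← hf y y' i fun j _ _ => hy j (by omega)]
    exact h i hi

/-- The key finiteness and homogeneity statement: for large `s`, every set of sequences with a
prescribed left half splits into the same finite number of pieces according to the part of the
image sequence to the left of `s`. -/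
lemma exists_hasIndex {f g : FullShift n → FullShift n} {r : ℕ} (hf : HasRadius f r)
    (hg : HasRadius g r) (hgf : ∀ x, g (f x) = x) {s : ℕ} (hs : 3 * r ≤ s) :
    ∃ d, HasIndex (LeftEq 0) (fun x y => LeftEq s (f x) (f y)) d := by
  classical
  -- points are labelled after their left half has been replaced by a constant
  let T : FullShift n → FullShift n := fun x i => if 0 ≤ i then x i else 0
  have hT : ∀ (x : FullShift n) (i : ℤ), 0 ≤ i → x i = T x i := fun x i hi => by simp [T, hi]
  have hT0 : ∀ x y : FullShift n, LeftEq 0 (T x) (T y) := fun x y i hi => by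
    simp [T, not_le.2 hi]
  let F : Setoid (FullShift n) :=
    ⟨fun x y => LeftEq s (f (T x)) (f (T y)),
      ⟨fun _ => (leftEq_equivalence _).refl _, fun h => (leftEq_equivalence _).symm h,
        fun h h' => (leftEq_equivalence _).trans h h'⟩⟩
  have hfin : Finite (Quotient F) := by
    let e : (Fin (s + r) → A n) → FullShift n := fun u i =>
      if h : 0 ≤ i ∧ i < s + r then u ⟨i.toNat, by omega⟩ else 0
    refine Finite.of_surjective (fun u => Quotient.mk F (e u)) fun c => ?_
    induction c using Quotient.inductionOn with
    | h x =>
      refine ⟨fun j => x (j : ℕ), Quotient.sound ?_⟩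
      have : LeftEq ((s + r : ℕ) : ℤ) (T (e fun j => x (j : ℕ))) (T x) := by
        intro i hi
        push_cast at hi
        by_cases h0 : 0 ≤ i
        · simp [T, e, h0, hi]
        · simp [T, h0]
      have := hf.leftEq this
      rw [show ((s + r : ℕ) : ℤ) - r = s by push_cast; ring] at this
      exact this
  let _ : Fintype (Quotient F) := Fintype.ofFinite _
  refine ⟨_, HasIndex.of_label (Quotient.mk F) (fun x y => ?_) fun x c => ?_⟩
  · rw [Quotient.eq]
    constructor
    · intro h
      refine ⟨?_, leftEq_of_change_left hf hg hgf (by exact_mod_cast hs) (hT x) (hT y)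
        (hT0 x y) h⟩
      have := hg.leftEq h
      rw [hgf, hgf] at this
      exact fun i hi => this i (by omega)
    · rintro ⟨h0, h⟩
      exact leftEq_of_change_left hf hg hgf (by exact_mod_cast hs)
        (fun i hi => (hT x i hi).symm) (fun i hi => (hT y i hi).symm) h0 h
  · induction c using Quotient.inductionOn with
    | h z =>
      refine ⟨fun i => if 0 ≤ i then z i else x i, fun i hi => by simp [not_le.2 hi],
        Quotient.sound ?_⟩
      have hTz : T (fun i => if 0 ≤ i then z i else x i) = T z := by
        funext i
        by_cases h0 : 0 ≤ i <;> simp [T, h0]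
      change LeftEq s (f (T _)) (f (T z))
      rw [hTz]
      exact (leftEq_equivalence _).refl _

/-! ### The homomorphism to the integers -/

/-- The additive function `d ↦ ∑ p ∣ n + 2, c p * v_p(d)` on nonzero natural numbers. -/
def weight (n : ℕ) (c : ℕ → ℤ) (d : ℕ) : ℤ :=
  ∑ p ∈ (n + 2).primeFactors, c p * (d.factorization p : ℤ)

lemma weight_mul (c : ℕ → ℤ) {d e : ℕ} (hd : d ≠ 0) (he : e ≠ 0) :
    weight n c (d * e) = weight n c d + weight n c e := by
  simp [weight, Nat.factorization_mul hd he, mul_add, Finset.sum_add_distrib]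

lemma weight_pow (c : ℕ → ℤ) (d k : ℕ) : weight n c (d ^ k) = k * weight n c d := by
  simp only [weight, Nat.factorization_pow, Finset.mul_sum]
  refine Finset.sum_congr rfl fun p _ => ?_
  simp
  ring

/-- If `n + 2` is not a proper power, the exponents in its prime factorization are coprime, so
Bézout coefficients give a weight equal to `1` at `n + 2`. -/
lemma exists_weight_eq_one (h : ¬ ∃ m k : ℕ, 2 ≤ m ∧ 2 ≤ k ∧ n + 2 = m ^ k) :
    ∃ c : ℕ → ℤ, weight n c (n + 2) = 1 := by
  obtain ⟨c, hc⟩ := (n + 2).primeFactors.gcd_eq_sum_mul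
    (fun p => ((n + 2).factorization p : ℤ))
  set G := (n + 2).primeFactors.gcd (fun p => ((n + 2).factorization p : ℤ)) with hG
  set g := G.natAbs with hg
  have hdvd : ∀ p ∈ (n + 2).primeFactors, g ∣ (n + 2).factorization p := fun p hp => by
    have : G ∣ ((n + 2).factorization p : ℤ) := Finset.gcd_dvd hp
    simpa using Int.natAbs_dvd_natAbs.2 this
  have hN : ∏ p ∈ (n + 2).primeFactors, p ^ (n + 2).factorization p = n + 2 :=
    Nat.prod_factorization_pow_eq_self (by omega)
  have hpow : n + 2 = (∏ p ∈ (n + 2).primeFactors, p ^ ((n + 2).factorization p / g)) ^ g := by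
    rw [← Finset.prod_pow]
    conv_lhs => rw [← hN]
    refine Finset.prod_congr rfl fun p hp => ?_
    rw [← pow_mul, Nat.div_mul_cancel (hdvd p hp)]
  set m := ∏ p ∈ (n + 2).primeFactors, p ^ ((n + 2).factorization p / g)
  have hg1 : g = 1 := by
    by_contra hne
    have hg0 : g ≠ 0 := by
      intro h0
      rw [h0] at hpow
      simp at hpow
    refine h ⟨m, g, ?_, by omega, hpow⟩
    by_contra hm
    have : m = 0 ∨ m = 1 := by omega
    rcases this with h' | h' <;> rw [h'] at hpow <;> simp [hg0] at hpow
  have hG1 : G = 1 ∨ G = -1 := Int.natAbs_eq_iff.1 hg1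
  rcases hG1 with h1 | h1
  · exact ⟨c, by rw [weight, ← h1, hc]; exact Finset.sum_congr rfl fun p _ => mul_comm _ _⟩
  · refine ⟨fun p => -c p, ?_⟩
    rw [← neg_neg (1 : ℤ), ← h1, hc, weight, ← Finset.sum_neg_distrib]
    exact Finset.sum_congr rfl fun p _ => by ring

/-- `z` is the logarithmic scaling factor of `f`, measured by the weight `c`: each class of
sequences with a prescribed left half is cut by the `f`-preimages of agreement to the left of
`s` into `d` pieces, and `z = weight d - s`. -/
def HasDeg (c : ℕ → ℤ) (f : FullShift n → FullShift n) (z : ℤ) : Prop :=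
  ∃ s d : ℕ, HasIndex (LeftEq 0) (fun x y => LeftEq s (f x) (f y)) d ∧ z = weight n c d - s

lemma HasDeg.unique {c : ℕ → ℤ} (hc : weight n c (n + 2) = 1) {f : FullShift n → FullShift n}
    (hf : Function.Surjective f) {z z' : ℤ} (h : HasDeg c f z) (h' : HasDeg c f z') :
    z = z' := by
  obtain ⟨s, d, hd, rfl⟩ := h
  obtain ⟨s', d', hd', rfl⟩ := h'
  wlog hs : s ≤ s' generalizing s s' d d'
  · exact (this s' d' hd' s d hd (by omega)).symm
  obtain ⟨k, rfl⟩ := Nat.exists_eq_add_of_le hs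
  have h₁ := hd.mul (leftEq_equivalence 0) ((hasIndex_leftEq (n := n) s k).comap hf)
  have h₂ : d' = d * (n + 2) ^ k := by
    refine hd'.unique (leftEq_equivalence 0) ?_
    exact_mod_cast h₁
  rw [h₂, weight_mul c hd.ne_zero (by positivity), weight_pow, hc]
  push_cast
  ring

lemma HasDeg.comp {c : ℕ → ℤ} {f g : FullShift n → FullShift n} (hf : Function.Surjective f)
    (hg : ∀ x, g (shiftZ 1 x) = shiftZ 1 (g x)) {z w : ℤ} (h : HasDeg c f z)
    (h' : HasDeg c g w) : HasDeg c (fun x => g (f x)) (z + w) := by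
  obtain ⟨s, d, hd, rfl⟩ := h
  obtain ⟨t, e, he, rfl⟩ := h'
  -- as `g` commutes with the shift, the count for `g` may be translated from `0` to `s`
  have h₁ : HasIndex (LeftEq (n := n) s)
      (fun x y => LeftEq ((s + t : ℕ) : ℤ) (g x) (g y)) e := by
    have := he.comap (shiftZ_surjective (-s))
    simp only [comm_shiftZ hg, leftEq_shiftZ] at this
    convert this using 4 <;> push_cast <;> ring
  refine ⟨s + t, d * e, hd.mul (leftEq_equivalence 0) (h₁.comap hf), ?_⟩
  rw [weight_mul c hd.ne_zero he.ne_zero]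
  push_cast
  ring

lemma hasDeg_shiftZ {c : ℕ → ℤ} (hc : weight n c (n + 2) = 1) (i : ℤ) :
    HasDeg c (shiftZ (n := n) i) (-i) := by
  refine ⟨i.toNat, (n + 2) ^ (-i).toNat, ?_, ?_⟩
  · have := hasIndex_leftEq (n := n) 0 (-i).toNat
    simp only [leftEq_shiftZ]
    rwa [show (0 : ℤ) + ((-i).toNat : ℤ) = (i.toNat : ℤ) - i by omega] at this
  · rw [weight_pow, hc]
    omega

/-! ### The group operations of the automorphism group -/

/-- Composition of automorphisms of the shift, first `f` and then `g`. -/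
def autComp (f g : AutShift n) : AutShift n :=
  ⟨fun x => g.1 (f.1 x), g.2.1.comp f.2.1, fun x =>
    (congrArg g.1 (f.2.2.1 x)).trans (g.2.2.1 _), by
    obtain ⟨f', hf', hf₁, hf₂⟩ := f.2.2.2
    obtain ⟨g', hg', hg₁, hg₂⟩ := g.2.2.2
    exact ⟨fun x => f' (g' x), hf'.comp hg', fun x => (congrArg f' (hg₁ _)).trans (hf₁ x),
      fun x => (congrArg g.1 (hf₂ _)).trans (hg₂ x)⟩⟩

/-- The power `σ ^ i` of the shift as an automorphism. -/
def autShift (n : ℕ) (i : ℤ) : AutShift n :=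
  ⟨shiftZ i, continuous_shiftZ i, fun x => by rw [shiftZ_shiftZ, shiftZ_shiftZ, add_comm],
    shiftZ (-i), continuous_shiftZ _, fun x => by simp [shiftZ_shiftZ, shiftZ_zero],
    fun x => by simp [shiftZ_shiftZ, shiftZ_zero]⟩

lemma AutShift.surjective (f : AutShift n) : Function.Surjective f.1 := by
  obtain ⟨g, -, -, hg⟩ := f.2.2.2
  exact fun x => ⟨g x, hg x⟩

lemma exists_hasDeg (c : ℕ → ℤ) (f : AutShift n) : ∃ z, HasDeg c f.1 z := by
  obtain ⟨g, hg, hgf, hfg⟩ := f.2.2.2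
  obtain ⟨r, hr⟩ := exists_hasRadius f.2.1 f.2.2.1
  obtain ⟨r', hr'⟩ := exists_hasRadius hg fun x => by
    conv_lhs => rw [← hfg x, ← f.2.2.1, hgf]
  obtain ⟨d, hd⟩ := exists_hasIndex (hr.mono (le_max_left r r')) (hr'.mono (le_max_right r r'))
    hgf le_rfl
  exact ⟨_, _, d, hd, rfl⟩

/-! ### Roots of the shift -/

/-- Reading each letter of an alphabet of size `m ^ k` as a word of length `k` identifies the
shift with the `k`-th power of the shift on `m` letters, so the latter is a `k`-th root. -/
lemma exists_root {m k : ℕ} (hk : 2 ≤ k) (h : n + 2 = m ^ k) :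
    ∃ τ : AutShift n, ∀ x, τ.1^[k] x = shiftZ 1 x := by
  have hk0 : (k : ℤ) ≠ 0 := by omega
  have hkpos : (0 : ℤ) < k := by omega
  let e : A n ≃ (Fin k → Fin m) := (finCongr h).trans finFunctionFinEquiv.symm
  let Φ : FullShift n → ℤ → Fin m := fun x t => e (x (t / k))
    ⟨(t % k).toNat, by have := Int.emod_lt_of_pos t hkpos; have := Int.emod_nonneg t hk0; omega⟩
  let Ψ : (ℤ → Fin m) → FullShift n := fun y i => e.symm fun j => y (k * i + (j : ℕ))
  have hΨΦ : ∀ x, Ψ (Φ x) = x := by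
    intro x
    funext i
    simp only [Ψ, Φ]
    rw [Equiv.symm_apply_eq]
    funext j
    have hj : ((j : ℕ) : ℤ) < k := by exact_mod_cast j.2
    have h₁ : (k * i + ((j : ℕ) : ℤ)) / k = i := by
      rw [Int.mul_add_ediv_left _ _ hk0, Int.ediv_eq_zero_of_lt (by omega) hj, add_zero]
    have h₂ : (k * i + ((j : ℕ) : ℤ)) % k = (j : ℕ) := by
      rw [Int.mul_add_emod_self_left, Int.emod_eq_of_lt (by omega) hj]
    rw [h₁]
    ext
    simp [h₂]
  have hΦΨ : ∀ y, Φ (Ψ y) = y := by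
    intro y
    funext t
    have := Int.emod_nonneg t hk0
    have h₁ : (k : ℤ) * (t / k) + ((t % k).toNat : ℤ) = t := by
      rw [Int.toNat_of_nonneg this]
      exact Int.mul_ediv_add_emod t k
    simp only [Ψ, Φ, Equiv.apply_symm_apply, h₁]
  have hΦc : Continuous Φ := continuous_pi fun t =>
    (continuous_of_discreteTopology (f := fun a : A n => e a _)).comp (continuous_apply _)
  have hΨc : Continuous Ψ := continuous_pi fun i =>
    (continuous_of_discreteTopology (f := e.symm)).comp
      (continuous_pi fun j => continuous_apply _)
  let S : ℤ → (ℤ → Fin m) → ℤ → Fin m := fun a y t => y (t - a)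
  have hS : ∀ a b y, S a (S b y) = S (a + b) y := fun a b y => by
    funext t; simp only [S]; congr 1; ring
  have hS0 : ∀ y, S 0 y = y := fun y => by funext t; simp [S]
  have hSc : ∀ a, Continuous (S a) := fun a => continuous_pi fun t => continuous_apply _
  have hΨS : ∀ y, Ψ (S k y) = shiftZ 1 (Ψ y) := by
    intro y
    funext i
    simp only [Ψ, S, shiftZ]
    refine congrArg e.symm ?_
    funext j
    ring_nf
  clear_value Φ Ψ S
  have hΦS : ∀ x, Φ (shiftZ 1 x) = S k (Φ x) := by
    intro x
    rw [← hΦΨ (S k (Φ x)), hΨS, hΨΦ]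
  refine ⟨⟨fun x => Ψ (S 1 (Φ x)), hΨc.comp ((hSc 1).comp hΦc), fun x => ?_,
    fun x => Ψ (S (-1) (Φ x)), hΨc.comp ((hSc (-1)).comp hΦc), fun x => ?_, fun x => ?_⟩,
    fun x => ?_⟩
  · beta_reduce
    rw [hΦS, hS, add_comm, ← hS, hΨS]
  · simp [hΦΨ, hS, hS0, hΨΦ]
  · simp [hΦΨ, hS, hS0, hΨΦ]
  · have hit : ∀ j : ℕ, (fun x => Ψ (S 1 (Φ x)))^[j] x = Ψ (S j (Φ x)) := by
      intro j
      induction j with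
      | zero => simp [hS0, hΨΦ]
      | succ j ih => rw [Function.iterate_succ_apply', ih, hΦΨ, hS, Nat.cast_succ, add_comm]
    rw [hit, hΨS, hΨΦ]

/-- There exists a subgroup `H` of `Aut(X_n^ℤ, σ_n)` (a set of
automorphisms containing the identity and closed under composition and inverses) such
that every automorphism can be written uniquely as `σ_n^i ∘ h` with `i : ℤ` and `h ∈ H`
(equivalently, the central extension `1 → ⟨σ_n⟩ → Aut(X_n^ℤ, σ_n) → Aut/⟨σ_n⟩ → 1`
splits) if and only if the alphabet size `n + 2` is not of the form `m ^ k` for integers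
`m ≥ 2`, `k ≥ 2`. -/
theorem splits_iff_not_proper_power (n : ℕ) :
    (∃ S : Set (AutShift n),
        (∀ e : AutShift n, (∀ x, e.1 x = x) → e ∈ S) ∧
        (∀ f ∈ S, ∀ g ∈ S, ∀ h : AutShift n, (∀ x, h.1 x = g.1 (f.1 x)) → h ∈ S) ∧
        (∀ f ∈ S, ∀ g : AutShift n, (∀ x, g.1 (f.1 x) = x) → g ∈ S) ∧
        (∀ f : AutShift n,
          ∃ (i : ℤ) (h : AutShift n), h ∈ S ∧ (∀ x, f.1 x = shiftZ i (h.1 x)) ∧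
            ∀ (i' : ℤ) (h' : AutShift n), h' ∈ S →
              (∀ x, f.1 x = shiftZ i' (h'.1 x)) → i = i' ∧ h = h')) ↔
      ¬ ∃ m k : ℕ, 2 ≤ m ∧ 2 ≤ k ∧ n + 2 = m ^ k := by
  constructor
  · rintro ⟨S, hid, hcomp, -, hdec⟩ ⟨m, k, -, hk, hn⟩
    obtain ⟨τ, hτ⟩ := exists_root hk hn
    obtain ⟨i, h, hS, hτi, -⟩ := hdec τ
    have hpow : ∀ j : ℕ, ∃ g ∈ S, ∀ x, τ.1^[j] x = shiftZ (i * j) (g.1 x) := by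
      intro j
      induction j with
      | zero =>
        exact ⟨autShift n 0, hid _ fun x => shiftZ_zero x, fun x => by
          simp [autShift, shiftZ_zero]⟩
      | succ j ih =>
        obtain ⟨g, hg, hgx⟩ := ih
        refine ⟨autComp g h, hcomp g hg h hS _ fun _ => rfl, fun x => ?_⟩
        rw [Function.iterate_succ_apply', hgx, hτi, comm_shiftZ h.2.2.1, shiftZ_shiftZ]
        simp only [autComp, Nat.cast_succ]
        congr 1
        ring
    obtain ⟨g, hg, hgx⟩ := hpow k
    -- both `σ = σ ^ 1 ∘ id` and `σ = τ ^ k = σ ^ (i * k) ∘ g` decompose the shift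
    obtain ⟨i₀, h₀, -, -, huniq⟩ := hdec (autShift n 1)
    have h₁ := (huniq 1 (autShift n 0) (hid _ fun x => shiftZ_zero x) fun x => by
      simp [autShift, shiftZ_zero]).1
    have h₂ := (huniq (i * k) g hg fun x => by rw [← hgx, hτ]; rfl).1
    have hdvd : (k : ℤ) ∣ 1 := ⟨i, by rw [← h₁, h₂, mul_comm]⟩
    have := Int.le_of_dvd one_pos hdvd
    omega
  · intro hn
    obtain ⟨c, hc⟩ := exists_weight_eq_one hn
    refine ⟨{f | HasDeg c f.1 0}, fun e he => ?_, fun f hf g hg h hh => ?_,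
      fun f hf g hgf => ?_, fun f => ?_⟩
    · have := hasDeg_shiftZ (n := n) hc 0
      have he' : e.1 = shiftZ 0 := funext fun x => by rw [he, shiftZ_zero]
      simpa [he'] using this
    · have hh' : h.1 = fun x => g.1 (f.1 x) := funext hh
      have := HasDeg.comp f.surjective g.2.2.1 hf hg
      simpa [hh'] using this
    · obtain ⟨z, hz⟩ := exists_hasDeg c g
      have h₁ := HasDeg.comp f.surjective g.2.2.1 hf hz
      have h₂ := hasDeg_shiftZ (n := n) hc 0
      have he : (fun x => g.1 (f.1 x)) = shiftZ 0 := funext fun x => by rw [hgf, shiftZ_zero]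
      rw [he] at h₁
      have hz0 := h₁.unique hc (shiftZ_surjective 0) h₂
      have : z = 0 := by simpa using hz0
      rw [this] at hz
      exact hz
    · obtain ⟨z, hz⟩ := exists_hasDeg c f
      refine ⟨-z, autComp f (autShift n z), ?_, fun x => ?_, fun i' h' hS hf' => ?_⟩
      · have := HasDeg.comp f.surjective (autShift n z).2.2.1 hz (hasDeg_shiftZ hc z)
        rw [add_neg_cancel] at this
        exact this
      · simp [autComp, autShift, shiftZ_shiftZ, shiftZ_zero]
      · have h₁ := HasDeg.comp h'.surjective (autShift n i').2.2.1 hS (hasDeg_shiftZ hc i')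
        have he : (fun x => (autShift n i').1 (h'.1 x)) = f.1 := funext fun x => (hf' x).symm
        have h₂ : HasDeg c f.1 (0 + -i') := by
          rw [← he]
          exact h₁
        have hz' := hz.unique hc f.surjective h₂
        refine ⟨by omega, Subtype.ext (funext fun x => ?_)⟩
        simp only [autComp, autShift]
        rw [hf' x, shiftZ_shiftZ, show z + i' = 0 by omega, shiftZ_zero]

end ShiftPaper
end

section
/- The set M_n of minimal strongly synchronizing core transducers over X_n, together with the binary operation (T, U) ↦ TU, is a monoid: the product is associative (with identity the single-state identity transducer). -/
/-!
A map on infinite words has a normal form `nrm`: for a non-constant map the greatest common prefix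
of its values is removed, and for a constant map the value is replaced by the canonical periodic
point `canon` of its tail equivalence class. This normal form is not changed by putting a fixed
word in front of all values (`nrm_app`). The states of the minimal representative of a strongly
synchronizing transducer `T` induce exactly the normal forms of the maps induced by the core states
of `T` (`minRep_spec`, `minRep_range`), and an element of `M_n` is determined up to ω-equality by
the set of maps of its states (`omegaEq_of_range`).

Consequently, to compare two minimal representatives it suffices to give a nonempty relation
between the states of the two transducers that is preserved by reading a letter and relates only
states with equal normal forms: by synchronization it reaches all core states on both sides
(`omegaEq_of_sim`). For associativity, both `(TU)V` and `T(UV)` are compared with the minimal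
representative of the core of `T * (U * V)`. In `mulT_left` the core state `(p, q)` of `T * U`
corresponds to its class in `TU`, and the state `v` of `V` has to be advanced along the word
`Λ(ε, (p, q))` which is missing in front of the output of that class; in `mulT_right` the common
prefix that is removed from a core state of `U * V` is a common prefix in the triple product as
well.

In the degenerate case in which the product of two factors induces constant maps, `Λ(ε, ·)` is not a
finite word. The constant values are periodic up to a finite prefix, and every state of a strongly synchronizing transducer
sends tail equivalent inputs to tail equivalent outputs (`TE.hmap`), so only the tail class
matters. A tail class of periodic words contains the infinite power of exactly one prime word that
is least among its rotations, which makes `canon` well defined. The unit laws follow by relating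
`(e, q)` and `(q, e)` to `q`, as elements of `M_n` induce maps in normal form (`MnMem.nrm_hmap`).
-/

/-!
Common definitions: transducers over a finite alphabet, strong synchronization,
cores, ω-equivalence, minimal representatives, the monoids `M_n`, `SL_n`, `SO_n`,
the groups `O_n`, `L_n`, annotations, and the two-sided full shift.

Throughout, the alphabet is `Fin (n + 2)`, i.e. an alphabet of size `n + 2 ≥ 2`.
-/

namespace ShiftPaper

variable {n : ℕ}

/-! ### Infinite words -/

/-- The infinite word `w x` obtained by putting the finite word `w` in front of `x`. -/
def app (w : Word n) (x : ℕ → A n) : ℕ → A n :=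
  fun j => if j < w.length then w.getD j default else x (j - w.length)

/-- The prefix of length `k` of an infinite word. -/
def pre (x : ℕ → A n) (k : ℕ) : Word n := (List.range k).map x

/-- The infinite word `x` with its first `k` letters removed. -/
def sh (k : ℕ) (x : ℕ → A n) : ℕ → A n := fun j => x (j + k)

theorem app_nil (x : ℕ → A n) : app [] x = x := by
  funext j; simp [app]

theorem app_add (w : Word n) (x : ℕ → A n) (m : ℕ) : app w x (m + w.length) = x m := by
  simp [app]

theorem app_lt (w : Word n) (x : ℕ → A n) {m : ℕ} (h : m < w.length) :
    app w x m = w.getD m default := by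
  simp [app, h]

theorem app_append (u v : Word n) (x : ℕ → A n) : app (u ++ v) x = app u (app v x) := by
  funext j
  simp only [app, List.length_append]
  by_cases h1 : j < u.length
  · rw [if_pos (by omega), if_pos h1, List.getD_append _ _ _ _ h1]
  · rw [if_neg h1]
    by_cases h2 : j < u.length + v.length
    · rw [if_pos h2, if_pos (by omega), List.getD_append_right _ _ _ _ (by omega)]
    · rw [if_neg h2, if_neg (by omega)]
      congr 1; omega

theorem app_cons (a : A n) (w : Word n) (x : ℕ → A n) : app (a :: w) x = app [a] (app w x) :=
  app_append [a] w x

@[simp] theorem pre_length (x : ℕ → A n) (k : ℕ) : (pre x k).length = k := by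
  simp [pre]

theorem pre_getD (x : ℕ → A n) {k m : ℕ} (h : m < k) : (pre x k).getD m default = x m := by
  simp [pre, List.getD, h]

theorem app_pre_sh (x : ℕ → A n) (k : ℕ) : app (pre x k) (sh k x) = x := by
  funext j
  by_cases h : j < k
  · rw [app_lt _ _ (by simpa using h), pre_getD _ h]
  · obtain ⟨m, rfl⟩ := Nat.exists_eq_add_of_le' (not_lt.1 h)
    have := app_add (pre x k) (sh k x) m
    rw [pre_length] at this
    rw [this, sh]

theorem sh_app (w : Word n) (x : ℕ → A n) : sh w.length (app w x) = x := by
  funext j; exact app_add w x j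

theorem app_inj {w : Word n} {x y : ℕ → A n} (h : app w x = app w y) : x = y := by
  rw [← sh_app w x, h, sh_app]

/-- If `u` and `v` are prefixes of the same infinite word and `u` is not longer than `v`,
then `u` is a prefix of `v`. -/
theorem append_drop_of_app_eq {u v : Word n} {x y : ℕ → A n} (h : app u x = app v y)
    (hl : u.length ≤ v.length) : u ++ v.drop u.length = v := by
  have ht : v.take u.length = u := by
    apply List.ext_getElem
    · simpa using hl
    · intro i h1 h2
      have := congrFun h i
      rw [app_lt _ _ h2, app_lt _ _ (by omega), List.getD_eq_getElem _ _ h2,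
        List.getD_eq_getElem _ _ (by omega)] at this
      simp [this]
  conv_rhs => rw [← List.take_append_drop u.length v, ht]

theorem pre_add (x : ℕ → A n) (k l : ℕ) : pre x (k + l) = pre x k ++ pre (sh k x) l := by
  simp only [pre, List.range_add, List.map_append, List.map_map]
  congr 1
  apply List.map_congr_left
  intro i _
  simp [sh, Nat.add_comm]

theorem pre_app (w : Word n) (x : ℕ → A n) (k : ℕ) :
    pre (app w x) (w.length + k) = w ++ pre x k := by
  rw [pre_add, sh_app]
  congr 1
  apply List.ext_getElem
  · simp
  · intro i h1 h2
    rw [← List.getD_eq_getElem (pre (app w x) w.length) default h1, pre_getD _ h2, app_lt _ _ h2,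
      List.getD_eq_getElem]

/-! ### Periodic words and tail equivalence -/

/-- Tail equivalence: two infinite words agree after deletion of finite prefixes. -/
def TE (z z' : ℕ → A n) : Prop := ∃ i j, sh i z = sh j z'

theorem sh_sh (i j : ℕ) (z : ℕ → A n) : sh i (sh j z) = sh (i + j) z := by
  funext m; simp [sh, Nat.add_assoc]

theorem TE.refl (z : ℕ → A n) : TE z z := ⟨0, 0, rfl⟩

theorem TE.symm {z z' : ℕ → A n} : TE z z' → TE z' z := fun ⟨i, j, h⟩ => ⟨j, i, h.symm⟩

theorem TE.trans {z z' z'' : ℕ → A n} : TE z z' → TE z' z'' → TE z z'' := by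
  rintro ⟨i, j, h⟩ ⟨k, l, h'⟩
  refine ⟨k + i, j + l, ?_⟩
  rw [← sh_sh, h, sh_sh, Nat.add_comm k j, ← sh_sh, h', sh_sh]

theorem TE.app (w : Word n) (z : ℕ → A n) : TE (app w z) z :=
  ⟨w.length, 0, by rw [sh_app]; rfl⟩

/-- The infinite power `y y y ⋯` of a nonempty word. -/
def pw (y : Word n) : ℕ → A n := fun j => y.getD (j % y.length) default

theorem app_pw (y : Word n) : app y (pw y) = pw y := by
  funext j
  by_cases h : j < y.length
  · rw [app_lt _ _ h, pw, Nat.mod_eq_of_lt h]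
  · obtain ⟨m, rfl⟩ := Nat.exists_eq_add_of_le' (not_lt.1 h)
    rw [app_add]; simp [pw]

theorem eq_pw_of_app {y : Word n} (hy : y ≠ []) {z : ℕ → A n} (h : app y z = z) : z = pw y := by
  have hl : 0 < y.length := List.length_pos_iff.2 hy
  funext j
  induction j using Nat.strong_induction_on with
  | _ j ih =>
    by_cases hj : j < y.length
    · rw [← h, ← app_pw, app_lt _ _ hj, app_lt _ _ hj]
    · obtain ⟨m, rfl⟩ := Nat.exists_eq_add_of_le' (not_lt.1 hj)
      rw [← h, ← app_pw, app_add, app_add]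
      exact ih m (by omega)

theorem pre_pw (y : Word n) : pre (pw y) y.length = y := by
  have := pre_app y (pw y) 0
  rw [app_pw] at this
  simpa [pre] using this

theorem sh_pw (y : Word n) : sh y.length (pw y) = pw y := by
  conv_lhs => rw [← app_pw]
  rw [sh_app]

theorem sh_mul {p : ℕ} {z : ℕ → A n} (h : sh p z = z) (k : ℕ) : sh (k * p) z = z := by
  induction k with
  | zero => rw [Nat.zero_mul]; rfl
  | succ k ih => rw [Nat.succ_mul, ← sh_sh, h, ih]

theorem eq_pw_of_sh {p : ℕ} (hp : 0 < p) {z : ℕ → A n} (h : sh p z = z) : z = pw (pre z p) := by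
  apply eq_pw_of_app
  · intro h0
    have := congrArg List.length h0
    simp at this; omega
  · nth_rw 2 [← h]
    exact app_pre_sh z p

theorem flatten_pre {p : ℕ} {z : ℕ → A n} (h : sh p z = z) (k : ℕ) :
    pre z (k * p) = (List.replicate k (pre z p)).flatten := by
  induction k with
  | zero => simp [pre]
  | succ k ih =>
    rw [Nat.succ_mul, Nat.add_comm, pre_add, h, ih, List.replicate_succ, List.flatten_cons]

/-- A word is prime iff its length is the least period of its infinite power. -/
theorem isPrime_iff (y : Word n) :
    IsPrime y ↔ y ≠ [] ∧ ∀ p, 0 < p → sh p (pw y) = pw y → y.length ≤ p := by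
  classical
  constructor
  · rintro ⟨h0, h⟩
    refine ⟨h0, fun p hp hper => ?_⟩
    have hl : 0 < y.length := List.length_pos_iff.2 h0
    have hex : ∃ m, 0 < m ∧ sh m (pw y) = pw y := ⟨p, hp, hper⟩
    obtain ⟨hm0, hm⟩ := Nat.find_spec hex
    set m := Nat.find hex with hmdef
    have hmin : m ≤ p := Nat.find_min' hex ⟨hp, hper⟩
    -- the remainder of the period `|y|` modulo the least period `m` is a period too
    have hr : sh (y.length % m) (pw y) = pw y := by
      have h1 := sh_mul hm (y.length / m)
      have h2 := sh_pw y
      nth_rw 1 [← h1]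
      rw [sh_sh, Nat.mul_comm, Nat.mod_add_div, h2]
    have hdvd : y.length % m = 0 := by
      by_contra hne
      exact Nat.find_min hex (Nat.mod_lt _ hm0) ⟨Nat.pos_of_ne_zero hne, hr⟩
    have hk := flatten_pre hm (y.length / m)
    rw [Nat.div_mul_cancel (Nat.dvd_of_mod_eq_zero hdvd), pre_pw] at hk
    have := h _ _ hk
    rw [pre_length] at this
    omega
  · rintro ⟨h0, h⟩
    refine ⟨h0, fun u k hk => ?_⟩
    have hu : u ≠ [] := by
      rintro rfl
      apply h0; rw [hk]; simp
    have hyu : app y (pw u) = pw u := by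
      rw [hk]
      clear hk
      induction k with
      | zero => simp [app_nil]
      | succ k ih => rw [List.replicate_succ, List.flatten_cons, app_append, ih, app_pw]
    have := eq_pw_of_app h0 hyu
    exact h _ (List.length_pos_iff.2 hu) (by rw [← this]; exact sh_pw u)

theorem pw_rotate (y : Word n) (i : ℕ) : pw (y.rotate i) = sh i (pw y) := by
  rcases eq_or_ne y [] with rfl | hy
  · funext j; simp [pw, sh]
  have hl : 0 < y.length := List.length_pos_iff.2 hy
  funext j
  have h1 := Nat.mod_lt j hl
  have h2 := Nat.mod_lt (j + i) hl
  simp only [pw, sh, List.length_rotate]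
  rw [List.getD_eq_getElem _ _ (by simpa using h1), List.getD_eq_getElem _ _ h2,
    List.getElem_rotate]
  congr 1
  simp

theorem IsPrime.rotate {y : Word n} (h : IsPrime y) (i : ℕ) : IsPrime (y.rotate i) := by
  rw [isPrime_iff] at h ⊢
  refine ⟨by simpa using h.1, fun p hp hper => ?_⟩
  rw [List.length_rotate]
  refine h.2 p hp ?_
  have hl : 0 < y.length := List.length_pos_iff.2 h.1
  rw [pw_rotate] at hper
  -- delete further letters to come back to `pw y` itself
  have hi := sh_mul (sh_pw y) i
  have hle : i ≤ i * y.length := Nat.le_mul_of_pos_right i hl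
  have h3 := congrArg (sh (i * y.length - i)) hper
  rw [sh_sh, sh_sh, sh_sh, Nat.sub_add_cancel hle,
    show i * y.length - i + p + i = p + i * y.length by omega, hi, ← sh_sh, hi] at h3
  exact h3

/-- Tail equivalent infinite powers of prime words: the words are rotations of each other. -/
theorem rotEq_of_TE {y y' : Word n} (hy : IsPrime y) (hy' : IsPrime y')
    (h : TE (pw y) (pw y')) : ∃ s, y' = y.rotate s := by
  obtain ⟨i, j, h⟩ := h
  have key : ∀ {u v : Word n}, u ≠ [] → ∀ {i j}, sh i (pw u) = sh j (pw v) →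
      ∃ s, pw u = sh s (pw v) := by
    intro u v hu i j h
    have hl : 0 < u.length := List.length_pos_iff.2 hu
    have hle : i ≤ i * u.length := Nat.le_mul_of_pos_right i hl
    refine ⟨i * u.length - i + j, ?_⟩
    rw [← sh_sh, ← h, sh_sh, Nat.sub_add_cancel hle, sh_mul (sh_pw u)]
  obtain ⟨s, hs⟩ := key hy'.1 h.symm
  obtain ⟨t, ht⟩ := key hy.1 h
  have hlen : y.length = y'.length := by
    apply le_antisymm
    · refine ((isPrime_iff y).1 hy).2 _ (List.length_pos_iff.2 hy'.1) ?_
      rw [ht, sh_sh, Nat.add_comm, ← sh_sh, sh_pw]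
    · refine ((isPrime_iff y').1 hy').2 _ (List.length_pos_iff.2 hy.1) ?_
      rw [hs, sh_sh, Nat.add_comm, ← sh_sh, sh_pw]
  refine ⟨s, ?_⟩
  rw [← pre_pw y', hs, ← pw_rotate, ← hlen]
  conv_rhs => rw [← pre_pw (y.rotate s), List.length_rotate]

/-! ### Least rotations -/

theorem lexLtB_iff (u v : Word n) : lexLtB u v = true ↔ u < v := by
  induction u generalizing v with
  | nil => cases v <;> simp [lexLtB]
  | cons a u ih =>
    cases v with
    | nil => simp [lexLtB]
    | cons b v =>
      rw [List.cons_lt_cons_iff]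
      simp only [lexLtB]
      split_ifs with h1 h2
      · simp [h1]
      · simp only [false_iff, not_or, not_and]
        exact ⟨h1, fun h => absurd h2 (by rw [h]; exact lt_irrefl _)⟩
      · have : a = b := le_antisymm (not_lt.1 h2) (not_lt.1 h1)
        rw [ih]; simp [this]

theorem foldl_min (l : List (Word n)) (a : Word n) :
    (l.foldl (fun acc r => if lexLtB r acc then r else acc) a = a ∨
      l.foldl (fun acc r => if lexLtB r acc then r else acc) a ∈ l) ∧
    l.foldl (fun acc r => if lexLtB r acc then r else acc) a ≤ a ∧
    ∀ r ∈ l, l.foldl (fun acc r => if lexLtB r acc then r else acc) a ≤ r := by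
  induction l generalizing a with
  | nil => simp
  | cons b l ih =>
    simp only [List.foldl_cons]
    by_cases h : lexLtB b a
    · rw [if_pos h]
      have hlt := (lexLtB_iff b a).1 h
      obtain ⟨h1, h2, h3⟩ := ih b
      refine ⟨Or.inr ?_, h2.trans hlt.le, ?_⟩
      · rcases h1 with h1 | h1
        · rw [h1]; simp
        · exact List.mem_cons_of_mem _ h1
      · intro r hr
        rcases List.mem_cons.1 hr with rfl | hr
        · exact h2
        · exact h3 r hr
    · rw [if_neg h]
      have hle : a ≤ b := not_lt.1 fun h' => h ((lexLtB_iff b a).2 h')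
      obtain ⟨h1, h2, h3⟩ := ih a
      refine ⟨?_, h2, ?_⟩
      · rcases h1 with h1 | h1
        · exact Or.inl h1
        · exact Or.inr (List.mem_cons_of_mem _ h1)
      · intro r hr
        rcases List.mem_cons.1 hr with rfl | hr
        · exact h2.trans hle
        · exact h3 r hr

theorem minimalRot_rot (w : Word n) : ∃ i, minimalRot w = w.rotate i := by
  rcases (foldl_min ((List.range w.length).map fun i => w.rotate i) w).1 with h | h
  · exact ⟨0, by rw [minimalRot, h, List.rotate_zero]⟩
  · obtain ⟨i, -, hi⟩ := List.mem_map.1 h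
    exact ⟨i, by rw [minimalRot, ← hi]⟩

theorem minimalRot_le (w : Word n) (i : ℕ) : minimalRot w ≤ w.rotate i := by
  have h := foldl_min ((List.range w.length).map fun i => w.rotate i) w
  rcases eq_or_ne w [] with rfl | hw
  · rw [List.rotate_nil]; exact h.2.1
  · rw [← List.rotate_mod]
    refine h.2.2 _ (List.mem_map.2 ⟨i % w.length, ?_, rfl⟩)
    exact List.mem_range.2 (Nat.mod_lt _ (List.length_pos_iff.2 hw))

theorem minimalRot_rotate (w : Word n) (i : ℕ) : minimalRot (w.rotate i) = minimalRot w := by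
  apply le_antisymm
  · obtain ⟨j, hj⟩ := minimalRot_rot w
    obtain ⟨k, hk⟩ : w.rotate i ~r w := List.IsRotated.symm ⟨i, rfl⟩
    rw [hj]
    nth_rw 2 [← hk]
    rw [List.rotate_rotate]
    exact minimalRot_le _ _
  · obtain ⟨j, hj⟩ := minimalRot_rot (w.rotate i)
    rw [hj, List.rotate_rotate]
    exact minimalRot_le _ _

/-- `y` is a prime word, least in its rotation class, whose infinite power is tail equivalent
to `z`. -/
def IsCanon (z : ℕ → A n) (y : Word n) : Prop := IsPrime y ∧ minimalRot y = y ∧ TE (pw y) z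

theorem IsCanon.unique {z : ℕ → A n} {y y' : Word n} (h : IsCanon z y) (h' : IsCanon z y') :
    y = y' := by
  obtain ⟨s, hs⟩ := rotEq_of_TE h.1 h'.1 (h.2.2.trans h'.2.2.symm)
  rw [← h.2.1, ← h'.2.1, hs, minimalRot_rotate]

theorem IsCanon.congr {z z' : ℕ → A n} {y : Word n} (h : IsCanon z y) (ht : TE z z') :
    IsCanon z' y := ⟨h.1, h.2.1, h.2.2.trans ht⟩

/-- The canonical point of the tail class of `z`: the infinite power of the word `y` with
`IsCanon z y`.  If the tail class of `z` has no periodic member, the value is an arbitrary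
point. -/
noncomputable def canon (z : ℕ → A n) : ℕ → A n := by
  classical
  exact if h : ∃ y, IsCanon z y then pw h.choose else fun _ => default

theorem IsCanon.canon_eq {z : ℕ → A n} {y : Word n} (h : IsCanon z y) : canon z = pw y := by
  have hex : ∃ y, IsCanon z y := ⟨y, h⟩
  rw [canon, dif_pos hex, hex.choose_spec.unique h]

theorem canon_congr {z z' : ℕ → A n} (h : TE z z') : canon z = canon z' := by
  by_cases hex : ∃ y, IsCanon z y
  · obtain ⟨y, hy⟩ := hex
    rw [hy.canon_eq, (hy.congr h).canon_eq]
  · have hex' : ¬ ∃ y, IsCanon z' y := fun ⟨y, hy⟩ => hex ⟨y, hy.congr h.symm⟩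
    rw [canon, canon, dif_neg hex, dif_neg hex']

/-- A purely periodic word has a canonical word, namely the least rotation of the prefix whose
length is the least period. -/
theorem isCanon_of_period {z : ℕ → A n} {m : ℕ} (hm0 : 0 < m) (hm : sh m z = z)
    (hmin : ∀ p, 0 < p → sh p z = z → m ≤ p) : IsCanon z (minimalRot (pre z m)) := by
  have hz := eq_pw_of_sh hm0 hm
  obtain ⟨i, hi⟩ := minimalRot_rot (pre z m)
  have hp : IsPrime (pre z m) := by
    rw [isPrime_iff, ← hz]
    refine ⟨fun h => ?_, by simpa using hmin⟩
    have := congrArg List.length h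
    simp at this; omega
  refine ⟨hi ▸ hp.rotate i, ?_, ?_⟩
  · rw [hi, minimalRot_rotate, hi]
  · rw [hi, pw_rotate, ← hz]
    exact ⟨0, i, rfl⟩

/-! ### First disagreement and normalization of maps -/

/-- Two values of `f` disagree at position `j`. -/
def Dis (f : (ℕ → A n) → ℕ → A n) (j : ℕ) : Prop := ∃ x y, f x j ≠ f y j

/-- The normal form of a map `f`: if `f` is not constant, remove the greatest common prefix of
its values; if `f` is constant, replace its value by the canonical point of the tail class of
that value. -/
noncomputable def nrm (f : (ℕ → A n) → ℕ → A n) : (ℕ → A n) → ℕ → A n := by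
  classical
  exact if h : ∃ j, Dis f j then fun x => sh (Nat.find h) (f x)
    else fun _ => canon (f fun _ => default)

theorem nrm_of_first {f : (ℕ → A n) → ℕ → A n} {k : ℕ} (hk : Dis f k)
    (hlt : ∀ j < k, ¬ Dis f j) : nrm f = fun x => sh k (f x) := by
  classical
  have hex : ∃ j, Dis f j := ⟨k, hk⟩
  have : Nat.find hex = k := (Nat.find_eq_iff hex).2 ⟨hk, hlt⟩
  rw [nrm, dif_pos hex, this]

theorem nrm_of_zero {f : (ℕ → A n) → ℕ → A n} (h : Dis f 0) : nrm f = f := by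
  rw [nrm_of_first h (by simp)]; rfl

theorem nrm_of_const {f : (ℕ → A n) → ℕ → A n} {z : ℕ → A n} (h : ∀ x, f x = z) :
    nrm f = fun _ => canon z := by
  have hn : ¬ ∃ j, Dis f j := by
    rintro ⟨j, x, y, hxy⟩; rw [h x, h y] at hxy; exact hxy rfl
  rw [nrm, dif_neg hn, h]

theorem const_of_not_dis {f : (ℕ → A n) → ℕ → A n} (h : ¬ ∃ j, Dis f j) :
    ∃ z, ∀ x, f x = z := by
  refine ⟨f fun _ => default, fun x => funext fun j => ?_⟩
  by_contra hne
  exact h ⟨j, _, _, hne⟩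

theorem exists_first {f : (ℕ → A n) → ℕ → A n} (h : ∃ j, Dis f j) :
    ∃ k, Dis f k ∧ ∀ j < k, ¬ Dis f j := by
  classical
  exact ⟨Nat.find h, Nat.find_spec h, fun j hj => Nat.find_min h hj⟩

theorem dis_app {f : (ℕ → A n) → ℕ → A n} {w : Word n} {j : ℕ} :
    Dis (fun x => app w (f x)) (j + w.length) ↔ Dis f j := by
  simp only [Dis, app_add]

theorem not_dis_app {f : (ℕ → A n) → ℕ → A n} {w : Word n} {j : ℕ} (h : j < w.length) :
    ¬ Dis (fun x => app w (f x)) j := by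
  rintro ⟨x, y, hxy⟩
  simp only [app_lt _ _ h] at hxy
  exact hxy rfl

/-- Putting a common prefix in front of all values does not change the normal form. -/
theorem nrm_app (w : Word n) (f : (ℕ → A n) → ℕ → A n) :
    nrm (fun x => app w (f x)) = nrm f := by
  by_cases h : ∃ j, Dis f j
  · obtain ⟨k, hk, hlt⟩ := exists_first h
    rw [nrm_of_first hk hlt, nrm_of_first (dis_app.2 hk)]
    · funext x
      rw [← sh_sh, sh_app]
    · intro j hj
      by_cases hjw : j < w.length
      · exact not_dis_app hjw
      · obtain ⟨m, rfl⟩ := Nat.exists_eq_add_of_le' (not_lt.1 hjw)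
        rw [dis_app]; exact hlt m (by omega)
  · obtain ⟨z, hz⟩ := const_of_not_dis h
    rw [nrm_of_const hz, nrm_of_const (z := app w z) (by simp [hz]),
      canon_congr (TE.app w z)]

/-! ### Reading words, and the maps induced by states -/

theorem dsts_append (T : Transducer n) (u v : Word n) (q : T.Q) :
    dsts T (u ++ v) q = dsts T v (dsts T u q) := by
  induction u generalizing q with
  | nil => rfl
  | cons a u ih => exact ih _

theorem outs_append (T : Transducer n) (u v : Word n) (q : T.Q) :
    outs T (u ++ v) q = outs T u q ++ outs T v (dsts T u q) := by
  induction u generalizing q with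
  | nil => rfl
  | cons a u ih =>
    simp only [List.cons_append, outs, dsts, ih, List.append_assoc]

theorem outs_singleton (T : Transducer n) (a : A n) (q : T.Q) : outs T [a] q = T.out a q := by
  simp [outs]

/-- All sufficiently long input words have nonempty output. -/
def Productive (T : Transducer n) : Prop :=
  ∃ K, ∀ (w : Word n) (q : T.Q), K ≤ w.length → outs T w q ≠ []

theorem Productive.long {T : Transducer n} (h : Productive T) (L : ℕ) :
    ∃ K, ∀ (w : Word n) (q : T.Q), K ≤ w.length → L ≤ (outs T w q).length := by
  obtain ⟨K, hK⟩ := h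
  induction L with
  | zero => exact ⟨0, fun _ _ _ => Nat.zero_le _⟩
  | succ L ih =>
    obtain ⟨K', hK'⟩ := ih
    refine ⟨K' + K, fun w q hw => ?_⟩
    rw [← List.take_append_drop K' w, outs_append, List.length_append]
    have h1 := hK' (w.take K') q (by simp; omega)
    have h2 := List.length_pos_iff.2 (hK (w.drop K') (dsts T (w.take K') q) (by simp; omega))
    omega

theorem dsts_circuit {T : Transducer n} {w : Word n} {q : T.Q} (h : dsts T w q = q) (k : ℕ) :
    dsts T (List.replicate k w).flatten q = q := by
  induction k with
  | zero => rfl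
  | succ k ih => rw [List.replicate_succ, List.flatten_cons, dsts_append, h, ih]

theorem Productive.circuits {T : Transducer n} (h : Productive T) : CircuitsNonempty T := by
  obtain ⟨K, hK⟩ := h
  intro q w hw hc ho
  have hl : 0 < w.length := List.length_pos_iff.2 hw
  refine hK (List.replicate K w).flatten q ?_ ?_
  · simpa using Nat.le_mul_of_pos_right K hl
  · clear hK
    induction K with
    | zero => rfl
    | succ k ih => rw [List.replicate_succ, List.flatten_cons, outs_append, hc, ho, ih]; rfl

/-- By the pigeonhole principle, a long input word runs through a circuit. -/
theorem productive_of_circuits {T : Transducer n} (h : CircuitsNonempty T) : Productive T := by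
  classical
  have := Fintype.ofFinite T.Q
  refine ⟨Fintype.card T.Q, fun w q hw ho => ?_⟩
  obtain ⟨i, j, hij, he⟩ := Fintype.exists_ne_map_eq_of_card_lt
    (fun i : Fin (Fintype.card T.Q + 1) => dsts T (w.take i) q) (by simp)
  wlog hlt : i < j generalizing i j
  · exact this j i hij.symm he.symm (lt_of_le_of_ne (not_lt.1 hlt) hij.symm)
  have hlt' : (i : ℕ) < j := hlt
  have hj := j.2
  have hs : w.take j = w.take i ++ (w.drop i).take (j - i) := by
    rw [← List.take_add]; congr 1; omega
  have hc := h (dsts T (w.take i) q) ((w.drop i).take (j - i))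
    (by intro h0; have := congrArg List.length h0; simp at this; omega)
    (by rw [← dsts_append, ← hs]; exact he.symm)
  apply hc
  have h1 : outs T (w.take j ++ w.drop j) q = [] := by rw [List.take_append_drop, ho]
  rw [hs, outs_append, outs_append] at h1
  simp only [List.append_eq_nil_iff] at h1
  exact h1.1.2

theorem hmap_eq {T : Transducer n} {q : T.Q} {x : ℕ → A n} {k m : ℕ}
    (h : m < (outs T (pre x k) q).length) :
    hmap T q x m = (outs T (pre x k) q).getD m default := by
  classical
  have key : ∀ k l, m < (outs T (pre x k) q).length → k ≤ l →
      (outs T (pre x l) q).getD m default = (outs T (pre x k) q).getD m default := by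
    intro k l hk hkl
    obtain ⟨d, rfl⟩ := Nat.exists_eq_add_of_le hkl
    rw [pre_add, outs_append, List.getD_append _ _ _ _ hk]
  have hex : ∃ k, m < (outs T ((List.range k).map x) q).length := ⟨k, h⟩
  have hs := hex.choose_spec
  rw [hmap, dif_pos hex]
  rcases le_total k hex.choose with hl | hl
  · exact key _ _ h hl
  · exact (key _ _ hs hl).symm

theorem hmap_app {T : Transducer n} (hT : Productive T) (w : Word n) (q : T.Q) (x : ℕ → A n) :
    hmap T q (app w x) = app (outs T w q) (hmap T (dsts T w q) x) := by
  funext m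
  obtain ⟨k, hk⟩ := hT.long (m + 1)
  have h1 : m < (outs T (pre x k) (dsts T w q)).length := by
    have := hk (pre x k) (dsts T w q) (by simp); omega
  have h2 : outs T (pre (app w x) (w.length + k)) q
      = outs T w q ++ outs T (pre x k) (dsts T w q) := by
    rw [pre_app, outs_append]
  rw [hmap_eq (k := w.length + k) (by rw [h2, List.length_append]; omega), h2]
  by_cases hm : m < (outs T w q).length
  · rw [app_lt _ _ hm, List.getD_append _ _ _ _ hm]
  · obtain ⟨d, rfl⟩ := Nat.exists_eq_add_of_le' (not_lt.1 hm)
    rw [app_add, List.getD_append_right _ _ _ _ (by omega), Nat.add_sub_cancel,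
      hmap_eq (k := k) (by omega)]

theorem hmap_letter {T : Transducer n} (hT : Productive T) (a : A n) (q : T.Q) (x : ℕ → A n) :
    hmap T q (app [a] x) = app (T.out a q) (hmap T (T.tr a q) x) := by
  rw [hmap_app hT, outs_singleton]; rfl

/-- The maps `h_q` of a transducer with nonempty circuit outputs are the only solutions of the
recursion that reads one input letter. -/
theorem hmap_unique {T : Transducer n} (hT : Productive T)
    (f : T.Q → (ℕ → A n) → ℕ → A n)
    (hf : ∀ a q x, f q (app [a] x) = app (T.out a q) (f (T.tr a q) x)) (q : T.Q) :
    hmap T q = f q := by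
  have hw : ∀ (w : Word n) q x, f q (app w x) = app (outs T w q) (f (dsts T w q) x) := by
    intro w
    induction w with
    | nil => intro q x; rw [app_nil]; exact (app_nil _).symm
    | cons a w ih => intro q x; rw [app_cons, hf, ih]; exact (app_append _ _ _).symm
  funext x m
  obtain ⟨k, hk⟩ := hT.long (m + 1)
  have h1 : m < (outs T (pre x k) q).length := by
    have := hk (pre x k) q (by simp); omega
  have h2 := hw (pre x k) q (sh k x)
  rw [app_pre_sh] at h2
  rw [hmap_eq h1, h2, app_lt _ _ h1]

/-! ### Synchronization and cores -/

/-- Strongly synchronizing transducers all of whose circuits have nonempty output. -/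
def Good (T : Transducer n) : Prop := CircuitsNonempty T ∧ StronglySync T

theorem Good.prod {T : Transducer n} (h : Good T) : Productive T := productive_of_circuits h.1

theorem SyncAt.mono {T : Transducer n} {k l : ℕ} (h : SyncAt T k) (hl : k ≤ l) :
    SyncAt T l := by
  intro w hw p q
  rw [← List.take_append_drop (l - k) w, dsts_append, dsts_append]
  exact h _ (by simp; omega) _ _

theorem coreState_dsts {T : Transducer n} {k : ℕ} (h : SyncAt T k) {w : Word n}
    (hw : k ≤ w.length) (p : T.Q) : CoreState T (dsts T w p) :=
  ⟨w.length, w, h.mono hw, rfl, fun p' => h.mono hw w rfl p' p⟩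

theorem CoreState.long {T : Transducer n} {q : T.Q} (h : CoreState T q) (m : ℕ) :
    ∃ w : Word n, m ≤ w.length ∧ ∀ p, dsts T w p = q := by
  obtain ⟨k, w, -, -, hw⟩ := h
  exact ⟨List.replicate m default ++ w, by simp, fun p => by rw [dsts_append, hw]⟩

theorem CoreState.tr {T : Transducer n} {q : T.Q} (h : CoreState T q) (a : A n) :
    CoreState T (T.tr a q) := by
  obtain ⟨k, w, hk, hl, hw⟩ := h
  refine ⟨k + 1, w ++ [a], hk.mono (by omega), by simp [hl], fun p => ?_⟩
  rw [dsts_append, hw]; rfl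

theorem CoreState.dsts {T : Transducer n} {q : T.Q} (h : CoreState T q) (w : Word n) :
    CoreState T (dsts T w q) := by
  induction w generalizing q with
  | nil => exact h
  | cons a w ih => exact ih (h.tr a)

theorem exists_coreState {T : Transducer n} (h : StronglySync T) : ∃ q, CoreState T q := by
  obtain ⟨k, hk⟩ := h
  exact ⟨_, coreState_dsts hk (w := List.replicate k default) (by simp)
    (Classical.choice T.ne)⟩

theorem coreStateE_iff {T : Transducer n} (h : StronglySync T) {q : T.Q} :
    CoreStateE T q ↔ CoreState T q := by
  obtain ⟨p, hp⟩ := exists_coreState h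
  exact ⟨fun h' => h'.resolve_right fun h'' => h'' p hp, Or.inl⟩

/-- The inclusion of the states of the core. -/
def cv {T : Transducer n} (q : (coreT T).Q) : T.Q := q.1

theorem cv_inj {T : Transducer n} {p q : (coreT T).Q} (h : cv p = cv q) : p = q :=
  Subtype.ext h

theorem cv_core {T : Transducer n} (h : StronglySync T) (q : (coreT T).Q) :
    CoreState T (cv q) := (coreStateE_iff h).1 q.2

theorem exists_cv {T : Transducer n} {q : T.Q} (h : CoreState T q) : ∃ c, cv (T := T) c = q :=
  ⟨⟨q, Or.inl h⟩, rfl⟩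

theorem coreT_tr {T : Transducer n} (h : StronglySync T) (a : A n) (q : (coreT T).Q) :
    cv ((coreT T).tr a q) = T.tr a (cv q) := by
  have : CoreStateE T (T.tr a (cv q)) := Or.inl ((cv_core h q).tr a)
  exact congrArg cv (dif_pos (c := CoreStateE T (T.tr a (cv q))) this)

theorem coreT_out {T : Transducer n} (a : A n) (q : (coreT T).Q) :
    (coreT T).out a q = T.out a (cv q) := rfl

theorem coreT_dsts {T : Transducer n} (h : StronglySync T) (w : Word n) (q : (coreT T).Q) :
    cv (dsts (coreT T) w q) = dsts T w (cv q) := by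
  induction w generalizing q with
  | nil => rfl
  | cons a w ih => simp only [dsts]; rw [ih, coreT_tr h]

theorem coreT_outs {T : Transducer n} (h : StronglySync T) (w : Word n) (q : (coreT T).Q) :
    outs (coreT T) w q = outs T w (cv q) := by
  induction w generalizing q with
  | nil => rfl
  | cons a w ih => simp only [outs]; rw [ih, coreT_tr h, coreT_out]

theorem coreT_good {T : Transducer n} (h : Good T) : Good (coreT T) := by
  constructor
  · intro q w hw hc
    rw [coreT_outs h.2]
    exact h.1 _ _ hw (by rw [← coreT_dsts h.2, hc])
  · obtain ⟨k, hk⟩ := h.2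
    refine ⟨k, fun w hw p q => cv_inj ?_⟩
    rw [coreT_dsts h.2, coreT_dsts h.2]
    exact hk w hw _ _

theorem coreT_isCore {T : Transducer n} (h : Good T) : IsCore (coreT T) := by
  intro q
  obtain ⟨k, hk⟩ := (coreT_good h).2
  obtain ⟨w, hl, hw⟩ := (cv_core h.2 q).long k
  exact ⟨w.length, w, hk.mono hl, rfl, fun p => cv_inj (by rw [coreT_dsts h.2, hw])⟩

theorem coreT_hmap {T : Transducer n} (h : Good T) (q : (coreT T).Q) :
    hmap (coreT T) q = hmap T (cv q) := by
  refine hmap_unique (coreT_good h).prod (fun q => hmap T (cv q)) (fun a q x => ?_) q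
  rw [hmap_letter h.prod, coreT_tr h.2, coreT_out]

/-! ### Product transducers -/

/-- The state `(p, q)` of the product transducer. -/
def pr {T U : Transducer n} (p : T.Q) (q : U.Q) : (prodT T U).Q := (p, q)

theorem exists_pr {T U : Transducer n} (s : (prodT T U).Q) : ∃ p q, s = pr p q :=
  ⟨s.1, s.2, rfl⟩

theorem pr_inj {T U : Transducer n} {p p' : T.Q} {q q' : U.Q}
    (h : pr p q = pr p' q') : p = p' ∧ q = q' := Prod.mk.inj h

theorem prodT_tr {T U : Transducer n} (a : A n) (p : T.Q) (q : U.Q) :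
    (prodT T U).tr a (pr p q) = pr (T.tr a p) (dsts U (T.out a p) q) := rfl

theorem prodT_out {T U : Transducer n} (a : A n) (p : T.Q) (q : U.Q) :
    (prodT T U).out a (pr p q) = outs U (T.out a p) q := rfl

theorem prodT_dsts {T U : Transducer n} (w : Word n) (p : T.Q) (q : U.Q) :
    dsts (prodT T U) w (pr p q) = pr (dsts T w p) (dsts U (outs T w p) q) := by
  induction w generalizing p q with
  | nil => rfl
  | cons a w ih => simp only [dsts, outs, dsts_append, prodT_tr, ih]

theorem prodT_outs {T U : Transducer n} (w : Word n) (p : T.Q) (q : U.Q) :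
    outs (prodT T U) w (pr p q) = outs U (outs T w p) q := by
  induction w generalizing p q with
  | nil => rfl
  | cons a w ih => simp only [outs, outs_append, prodT_tr, prodT_out, ih]

theorem prodT_good {T U : Transducer n} (hT : Good T) (hU : Good U) : Good (prodT T U) := by
  constructor
  · intro s w hw hc
    obtain ⟨p, q, rfl⟩ := exists_pr s
    rw [prodT_dsts] at hc
    rw [prodT_outs]
    exact hU.1 _ _ (hT.1 _ _ hw (pr_inj hc).1) (pr_inj hc).2
  · -- first synchronize `T`; its further output, being long, then synchronizes `U`
    obtain ⟨k, hk⟩ := hT.2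
    obtain ⟨l, hl⟩ := hU.2
    obtain ⟨K, hK⟩ := hT.prod.long l
    refine ⟨k + K, ?_⟩
    intro w hw s s'
    obtain ⟨p, q, rfl⟩ := exists_pr s
    obtain ⟨p', q', rfl⟩ := exists_pr s'
    rw [← List.take_append_drop k w, dsts_append, dsts_append, prodT_dsts, prodT_dsts,
      prodT_dsts, prodT_dsts, hk (w.take k) (by simp; omega) p p']
    congr 1
    exact hl.mono (hK _ _ (by simp; omega)) _ rfl _ _

theorem prodT_hmap {T U : Transducer n} (hT : Good T) (hU : Good U) (p : T.Q) (q : U.Q) :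
    hmap (prodT T U) (pr p q) = fun x => hmap U q (hmap T p x) := by
  refine hmap_unique (prodT_good hT hU).prod
    (fun s : T.Q × U.Q => fun x => hmap U s.2 (hmap T s.1 x)) (fun a s x => ?_) (pr p q)
  obtain ⟨p, q, rfl⟩ := exists_pr s
  change hmap U q (hmap T p (app [a] x)) =
    app (outs U (T.out a p) q) (hmap U (dsts U (T.out a p) q) (hmap T (T.tr a p) x))
  rw [hmap_letter hT.prod, hmap_app hU.prod]

/-! ### Minimal representatives -/

theorem extent_spec {T : Transducer n} {q : T.Q} (h : FiniteExtent T q) :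
    Dis (hmap T q) (extentLen T q) ∧ ∀ j < extentLen T q, ¬ Dis (hmap T q) j := by
  classical
  have : extentLen T q = Nat.find h := by rw [extentLen, dif_pos h]
  rw [this]
  exact ⟨Nat.find_spec h, fun j hj => Nat.find_min h hj⟩

theorem extentWord_length (T : Transducer n) (q : T.Q) :
    (extentWord T q).length = extentLen T q := by
  simp [extentWord]

theorem nrm_hmap {T : Transducer n} {q : T.Q} (h : FiniteExtent T q) :
    nrm (hmap T q) = fun x => sh (extentLen T q) (hmap T q x) :=
  nrm_of_first (extent_spec h).1 (extent_spec h).2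

/-- Every value of `h_q` starts with the word `Λ(ε,q)`. -/
theorem hmap_eq_app_nrm {T : Transducer n} {q : T.Q} (h : FiniteExtent T q) (x : ℕ → A n) :
    hmap T q x = app (extentWord T q) (nrm (hmap T q) x) := by
  have h1 : extentWord T q = pre (hmap T q x) (extentLen T q) := by
    apply List.map_congr_left
    intro j hj
    by_contra hne
    exact (extent_spec h).2 j (List.mem_range.1 hj) ⟨_, _, hne⟩
  rw [nrm_hmap h, h1, app_pre_sh]

/-- `Λ(ε,q)` is not longer than the output on `a` followed by the common prefix `Λ(ε,·)` at the next
state, since the latter word is the greatest common prefix of the outputs on inputs starting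
with `a`. -/
theorem extentLen_le {T : Transducer n} (hT : Productive T) (h : ∀ q, FiniteExtent T q)
    (a : A n) (q : T.Q) :
    extentLen T q ≤ (T.out a q).length + extentLen T (T.tr a q) := by
  by_contra hlt
  obtain ⟨x, y, hxy⟩ := (extent_spec (h (T.tr a q))).1
  apply (extent_spec (h q)).2 (extentLen T (T.tr a q) + (T.out a q).length) (by omega)
  refine ⟨app [a] x, app [a] y, ?_⟩
  rw [hmap_letter hT, hmap_letter hT, app_add, app_add]
  exact hxy

/-- A state of `T`, regarded as a state of `removeIncomplete T`. -/
def rq {T : Transducer n} (q : T.Q) : (removeIncomplete T).Q := q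

theorem exists_rq {T : Transducer n} (s : (removeIncomplete T).Q) : ∃ q, rq (T := T) q = s :=
  ⟨s, rfl⟩

theorem rq_tr {T : Transducer n} (a : A n) (q : T.Q) :
    (removeIncomplete T).tr a (rq q) = rq (T.tr a q) := rfl

theorem rq_dsts {T : Transducer n} (w : Word n) (q : T.Q) :
    dsts (removeIncomplete T) w (rq q) = rq (dsts T w q) := by
  induction w generalizing q with
  | nil => rfl
  | cons a w ih => simp only [dsts, rq_tr, ih]

theorem rq_out_deg {T : Transducer n} (h : ¬ ∀ q, FiniteExtent T q) (a : A n) (q : T.Q) :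
    (removeIncomplete T).out a (rq q) = minimalRot (periodicRoot T) :=
  if_neg h

theorem rq_out {T : Transducer n} (hT : Productive T) (h : ∀ q, FiniteExtent T q)
    (a : A n) (q : T.Q) :
    extentWord T q ++ (removeIncomplete T).out a (rq q) =
      T.out a q ++ extentWord T (T.tr a q) := by
  have h1 : (removeIncomplete T).out a (rq q) =
      (T.out a q ++ extentWord T (T.tr a q)).drop (extentLen T q) := if_pos h
  rw [h1, ← extentWord_length]
  apply append_drop_of_app_eq (x := nrm (hmap T q) (app [a] fun _ => default))
    (y := nrm (hmap T (T.tr a q)) fun _ => default)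
  · rw [← hmap_eq_app_nrm (h q), hmap_letter hT, app_append, ← hmap_eq_app_nrm (h _)]
  · rw [List.length_append, extentWord_length, extentWord_length]
    exact extentLen_le hT h a q

theorem rq_outs {T : Transducer n} (hT : Productive T) (h : ∀ q, FiniteExtent T q)
    (w : Word n) (q : T.Q) :
    extentWord T q ++ outs (removeIncomplete T) w (rq q) =
      outs T w q ++ extentWord T (dsts T w q) := by
  induction w generalizing q with
  | nil => simp [outs, dsts]
  | cons a w ih =>
    simp only [outs, dsts, rq_tr]
    rw [← List.append_assoc, rq_out hT h, List.append_assoc, ih, List.append_assoc]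

theorem rq_sync {T : Transducer n} (h : StronglySync T) : StronglySync (removeIncomplete T) := by
  obtain ⟨k, hk⟩ := h
  refine ⟨k, fun w hw p q => ?_⟩
  obtain ⟨p, rfl⟩ := exists_rq p
  obtain ⟨q, rfl⟩ := exists_rq q
  rw [rq_dsts, rq_dsts, hk w hw p q]

theorem rq_coreState {T : Transducer n} {q : T.Q} (h : CoreState T q) :
    CoreState (removeIncomplete T) (rq q) := by
  obtain ⟨k, w, hk, hl, hw⟩ := h
  refine ⟨k, w, fun w hw p q => ?_, hl, fun p => ?_⟩
  · obtain ⟨p, rfl⟩ := exists_rq p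
    obtain ⟨q, rfl⟩ := exists_rq q
    rw [rq_dsts, rq_dsts, hk w hw p q]
  · obtain ⟨p, rfl⟩ := exists_rq p
    rw [rq_dsts, hw]

/-- If one state of a core transducer induces a constant map, then all do, and the values at
any two states are tail equivalent. -/
theorem const_of_not_finiteExtent {T : Transducer n} (hT : Good T) (hc : IsCore T)
    (h : ¬ ∀ q, FiniteExtent T q) :
    ∃ z : T.Q → ℕ → A n, (∀ q x, hmap T q x = z q) ∧ ∀ p q, TE (z p) (z q) := by
  push Not at h
  obtain ⟨q₀, hq₀⟩ := h
  obtain ⟨z₀, hz₀⟩ := const_of_not_dis hq₀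
  have key : ∀ q x, TE (hmap T q x) z₀ ∧ ∀ y, hmap T q x = hmap T q y := by
    intro q x
    obtain ⟨w, -, hw⟩ := (hc q).long 0
    have h1 : ∀ x, z₀ = app (outs T w q₀) (hmap T q x) := fun x => by
      rw [← hz₀ (app w x), hmap_app hT.prod, hw]
    exact ⟨h1 x ▸ (TE.app _ _).symm, fun y => app_inj ((h1 x).symm.trans (h1 y))⟩
  exact ⟨fun q => hmap T q fun _ => default, fun q x => (key q x).2 _,
    fun p q => (key p _).1.trans (key q _).1.symm⟩

/-- In the degenerate case the word chosen in `removeIncomplete` is the canonical word of the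
tail class of the outputs. -/
theorem isCanon_periodicRoot {T : Transducer n} (hT : Good T) (hc : IsCore T)
    {z : ℕ → A n} (hz : ∀ x, hmap T (Classical.choice T.ne) x = z) :
    IsCanon z (minimalRot (periodicRoot T)) := by
  classical
  set q := Classical.choice T.ne with hq
  -- a circuit at `q` shows that `z` is periodic
  obtain ⟨w, hl, hw⟩ := (hc q).long 1
  have h1 : app (outs T w q) z = z := by
    have := hmap_app hT.prod w q fun _ => default
    rw [hw, hz, hz] at this
    exact this.symm
  have h2 := hT.1 q w (by rintro rfl; simp at hl) (hw q)
  have h3 : sh (outs T w q).length z = z := by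
    conv_lhs => rw [← h1]
    exact sh_app _ _
  have hex : ∃ m, 0 < m ∧ ∀ j, hmap T (Classical.choice T.ne) (fun _ => default) (j + m) =
        hmap T (Classical.choice T.ne) (fun _ => default) j := by
    refine ⟨_, List.length_pos_iff.2 h2, fun j => ?_⟩
    rw [← hq, hz]; exact congrFun h3 j
  have hroot : periodicRoot T = pre z (Nat.find hex) := by
    rw [periodicRoot, dif_pos hex, ← hz fun _ => default]; rfl
  rw [hroot]
  refine isCanon_of_period (Nat.find_spec hex).1 ?_ ?_
  · funext j
    have := (Nat.find_spec hex).2 j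
    exact (congrFun (hz _) _).symm.trans (this.trans (congrFun (hz _) _))
  · intro p hp hper
    refine Nat.find_min' hex ⟨hp, fun j => ?_⟩
    rw [← hq, hz]; exact congrFun hper j

theorem circuits_of_out_eq {T : Transducer n} {y : Word n} (hy : y ≠ [])
    (h : ∀ a q, T.out a q = y) : CircuitsNonempty T := by
  intro q w hw _
  cases w with
  | nil => exact absurd rfl hw
  | cons a w => simp [outs, h, hy]

theorem hmap_of_out_eq {T : Transducer n} {y : Word n} (hy : y ≠ [])
    (h : ∀ a q, T.out a q = y) (q : T.Q) : hmap T q = fun _ => pw y :=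
  hmap_unique (productive_of_circuits (circuits_of_out_eq hy h)) (fun _ _ => pw y)
    (fun a q x => by rw [h, app_pw]) q

theorem rq_good {T : Transducer n} (hT : Good T) (hc : IsCore T) :
    Good (removeIncomplete T) := by
  refine ⟨?_, rq_sync hT.2⟩
  by_cases h : ∀ q, FiniteExtent T q
  · intro s w hw hcirc ho
    obtain ⟨q, rfl⟩ := exists_rq s
    rw [rq_dsts] at hcirc
    have hq : dsts T w q = q := hcirc
    have h1 := congrArg List.length (rq_outs hT.prod h w q)
    rw [ho, hq, List.length_append, List.length_append] at h1
    exact hT.1 q w hw hq (List.length_eq_zero_iff.1 (by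
      simp only [List.length_nil] at h1; omega))
  · obtain ⟨z, hz, -⟩ := const_of_not_finiteExtent hT hc h
    exact circuits_of_out_eq (isCanon_periodicRoot hT hc (hz _)).1.1 (rq_out_deg h)

theorem rq_hmap {T : Transducer n} (hT : Good T) (hc : IsCore T) (q : T.Q) :
    hmap (removeIncomplete T) (rq q) = nrm (hmap T q) := by
  by_cases h : ∀ q, FiniteExtent T q
  · refine hmap_unique (rq_good hT hc).prod (fun q : T.Q => nrm (hmap T q))
      (fun a s x => ?_) (rq q)
    obtain ⟨q, rfl⟩ := exists_rq s
    change nrm (hmap T q) (app [a] x) =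
      app ((removeIncomplete T).out a (rq q)) (nrm (hmap T (T.tr a q)) x)
    apply app_inj (w := extentWord T q)
    rw [← hmap_eq_app_nrm (h q), ← app_append, rq_out hT.prod h, app_append,
      ← hmap_eq_app_nrm (h _), hmap_letter hT.prod]
  · obtain ⟨z, hz, hTE⟩ := const_of_not_finiteExtent hT hc h
    have hcan := isCanon_periodicRoot hT hc (hz _)
    rw [hmap_of_out_eq hcan.1.1 (rq_out_deg h), nrm_of_const (hz q),
      (hcan.congr (hTE _ q)).canon_eq]

/-- The class of a state under ω-equivalence. -/
def qc {T : Transducer n} (q : T.Q) : (quotT T).Q := Quotient.mk (omegaSetoid T) q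

theorem exists_qc {T : Transducer n} (s : (quotT T).Q) : ∃ q, qc (T := T) q = s :=
  Quotient.exists_rep s

theorem qc_eq_iff {T : Transducer n} {p q : T.Q} :
    qc p = qc q ↔ hmap T p = hmap T q :=
  ⟨fun h => Quotient.exact h, fun h => Quotient.sound h⟩

/-- The condition for transitions and outputs to be well defined on ω-equivalence classes. -/
def Congr (T : Transducer n) : Prop := ∀ a p q, hmap T p = hmap T q →
  T.out a p = T.out a q ∧ hmap T (T.tr a p) = hmap T (T.tr a q)

theorem hmap_out (T : Transducer n) (q : T.Q) :
    hmap T (Quotient.out (s := omegaSetoid T) (qc q)) = hmap T q :=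
  Quotient.exact (Quotient.out_eq (s := omegaSetoid T) (qc q))

theorem qc_tr {T : Transducer n} (h : Congr T) (a : A n) (q : T.Q) :
    (quotT T).tr a (qc q) = qc (T.tr a q) :=
  qc_eq_iff.2 (h a _ _ (hmap_out T q)).2

theorem qc_out {T : Transducer n} (h : Congr T) (a : A n) (q : T.Q) :
    (quotT T).out a (qc q) = T.out a q :=
  (h a _ _ (hmap_out T q)).1

theorem qc_dsts {T : Transducer n} (h : Congr T) (w : Word n) (q : T.Q) :
    dsts (quotT T) w (qc q) = qc (dsts T w q) := by
  induction w generalizing q with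
  | nil => rfl
  | cons a w ih => simp only [dsts, qc_tr h, ih]

theorem qc_outs {T : Transducer n} (h : Congr T) (w : Word n) (q : T.Q) :
    outs (quotT T) w (qc q) = outs T w q := by
  induction w generalizing q with
  | nil => rfl
  | cons a w ih => simp only [outs, qc_tr h, qc_out h, ih]

theorem quotT_good {T : Transducer n} (h : Congr T) (hT : Good T) : Good (quotT T) := by
  constructor
  · obtain ⟨K, hK⟩ := hT.prod
    refine Productive.circuits ⟨K, fun w s hw => ?_⟩
    obtain ⟨q, rfl⟩ := exists_qc s
    rw [qc_outs h]
    exact hK w q hw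
  · obtain ⟨k, hk⟩ := hT.2
    refine ⟨k, fun w hw p q => ?_⟩
    obtain ⟨p, rfl⟩ := exists_qc p
    obtain ⟨q, rfl⟩ := exists_qc q
    rw [qc_dsts h, qc_dsts h, hk w hw p q]

theorem qc_hmap {T : Transducer n} (h : Congr T) (hT : Good T) (q : T.Q) :
    hmap (quotT T) (qc q) = hmap T q := by
  have := hmap_unique (quotT_good h hT).prod
    (fun s => hmap T (Quotient.out (s := omegaSetoid T) s)) (fun a s x => ?_) (qc q)
  · rw [this]; exact hmap_out T q
  · obtain ⟨q, rfl⟩ := exists_qc s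
    rw [qc_tr h, qc_out h]
    exact (congrFun (hmap_out T q) _).trans
      ((hmap_letter hT.prod a q x).trans (by rw [hmap_out]))

theorem quotT_weaklyMinimal {T : Transducer n} (h : Congr T) (hT : Good T) :
    WeaklyMinimal (quotT T) := by
  intro s t hst
  obtain ⟨p, rfl⟩ := exists_qc s
  obtain ⟨q, rfl⟩ := exists_qc t
  rw [qc_hmap h hT, qc_hmap h hT] at hst
  exact qc_eq_iff.2 hst

theorem quotT_isCore {T : Transducer n} (h : Congr T) (hT : Good T) (hc : IsCore T) :
    IsCore (quotT T) := by
  intro s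
  obtain ⟨q, rfl⟩ := exists_qc s
  obtain ⟨k, hk⟩ := (quotT_good h hT).2
  obtain ⟨w, hl, hw⟩ := (hc q).long k
  refine ⟨w.length, w, hk.mono hl, rfl, fun p => ?_⟩
  obtain ⟨p, rfl⟩ := exists_qc p
  rw [qc_dsts h, hw]

theorem congr_of_noIncomplete {T : Transducer n} (hT : Good T) (h : NoIncomplete T) :
    Congr T := by
  intro a p q hpq
  have key : ∀ x, app (T.out a p) (hmap T (T.tr a p) x) =
      app (T.out a q) (hmap T (T.tr a q) x) := fun x => by
    rw [← hmap_letter hT.prod, ← hmap_letter hT.prod, hpq]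
  have len : ∀ {u v : Word n} {f g : (ℕ → A n) → ℕ → A n}, Dis f 0 →
      (∀ x, app u (f x) = app v (g x)) → v.length ≤ u.length := by
    rintro u v f g ⟨x, y, hxy⟩ h'
    by_contra hlt
    apply hxy
    have h1 := congrFun (h' x) (0 + u.length)
    have h2 := congrFun (h' y) (0 + u.length)
    rw [app_add, app_lt _ _ (by omega)] at h1 h2
    rw [h1, h2]
  have h1 := len (h (T.tr a p)) key
  have h2 := len (h (T.tr a q)) fun x => (key x).symm
  have h3 : T.out a p = T.out a q := by
    have := append_drop_of_app_eq (key fun _ => default) h2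
    rwa [List.drop_eq_nil_of_le h1, List.append_nil] at this
  refine ⟨h3, funext fun x => ?_⟩
  have := key x
  rw [h3] at this
  exact app_inj this

theorem dis_nrm {f : (ℕ → A n) → ℕ → A n} (h : ∃ j, Dis f j) : Dis (nrm f) 0 := by
  obtain ⟨k, hk, hlt⟩ := exists_first h
  rw [nrm_of_first hk hlt]
  obtain ⟨x, y, hxy⟩ := hk
  exact ⟨x, y, by simpa [sh] using hxy⟩

theorem omegaEq_Zword {T : Transducer n} {y : Word n} (hy : y ≠ [])
    (h : ∀ q, hmap T q = fun _ => pw y) (hw : WeaklyMinimal T) : OmegaEq T (Zword y) := by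
  refine ⟨⟨fun _ => PUnit.unit, fun _ => Classical.choice T.ne, fun q => ?_, fun _ => rfl⟩,
    fun q => ?_⟩
  · exact hw _ _ (by rw [h, h])
  · rw [h, hmap_of_out_eq (T := Zword y) hy (fun _ _ => rfl)]

/-- The states of `[T]` are the images of the states of the core transducer `T` under a map that
commutes with transitions and under which the induced maps are normalized; if no state induces
a constant map, the outputs are shifted by the words `Λ(ε,q)`. -/
theorem minRep_spec {T : Transducer n} (hT : Good T) (hc : IsCore T) :
    MnMem (minRep T) ∧ WeaklyMinimal (minRep T) ∧
    ∃ cls : T.Q → (minRep T).Q, Function.Surjective cls ∧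
      (∀ a q, (minRep T).tr a (cls q) = cls (T.tr a q)) ∧
      (∀ q, hmap (minRep T) (cls q) = nrm (hmap T q)) ∧
      ((∀ q, FiniteExtent T q) → ∀ a q, extentWord T q ++ (minRep T).out a (cls q) =
        T.out a q ++ extentWord T (T.tr a q)) := by
  have hR := rq_good hT hc
  have hD := coreT_good hR
  have hDc := coreT_isCore hR
  have hDmap : ∀ d : (coreT (removeIncomplete T)).Q, ∀ q : T.Q, cv d = rq q →
      hmap (coreT (removeIncomplete T)) d = nrm (hmap T q) := fun d q hd => by
    rw [coreT_hmap hR, hd, rq_hmap hT hc]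
  choose c hcv using fun q : T.Q => exists_cv (rq_coreState (hc q))
  have hcsurj : ∀ d, ∃ q, c q = d := fun d => by
    obtain ⟨q, hq⟩ := exists_rq (cv d)
    exact ⟨q, cv_inj (by rw [hcv, hq])⟩
  have hmapc : ∀ q, hmap (coreT (removeIncomplete T)) (c q) = nrm (hmap T q) := fun q =>
    hDmap _ _ (hcv q)
  have hnoinc : (∀ q, FiniteExtent T q) → NoIncomplete (coreT (removeIncomplete T)) := by
    intro h d
    obtain ⟨q, rfl⟩ := hcsurj d
    have := dis_nrm (h q)
    rwa [← hmapc] at this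
  have hcong : Congr (coreT (removeIncomplete T)) := by
    by_cases h : ∀ q, FiniteExtent T q
    · exact congr_of_noIncomplete hD (hnoinc h)
    · obtain ⟨z, hz, -⟩ := const_of_not_finiteExtent hT hc h
      have hcan := isCanon_periodicRoot hT hc (hz _)
      have hout : ∀ a d, (coreT (removeIncomplete T)).out a d = minimalRot (periodicRoot T) := by
        intro a d
        exact rq_out_deg h a (cv (T := removeIncomplete T) d)
      intro a p q _
      rw [hout, hout, hmap_of_out_eq hcan.1.1 hout, hmap_of_out_eq hcan.1.1 hout]
      exact ⟨rfl, rfl⟩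
  have hQ : Good (minRep T) := quotT_good hcong hD
  have hwm : WeaklyMinimal (minRep T) := quotT_weaklyMinimal hcong hD
  have hmapq : ∀ q, hmap (minRep T) (qc (c q)) = nrm (hmap T q) := fun q =>
    (qc_hmap hcong hD (c q)).trans (hmapc q)
  have hsurj : ∀ s : (minRep T).Q, ∃ q, qc (c q) = s := fun s => by
    obtain ⟨d, rfl⟩ := exists_qc (T := coreT (removeIncomplete T)) s
    obtain ⟨q, rfl⟩ := hcsurj d
    exact ⟨q, rfl⟩
  refine ⟨⟨hQ.1, hQ.2, quotT_isCore hcong hD hDc, ?_⟩, hwm, fun q => qc (c q), hsurj, ?_,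
    hmapq, ?_⟩
  · by_cases h : ∀ q, FiniteExtent T q
    · refine Or.inl ⟨fun s => ?_, hwm⟩
      obtain ⟨q, rfl⟩ := hsurj s
      have := dis_nrm (h q)
      rwa [← hmapq] at this
    · obtain ⟨z, hz, hTE⟩ := const_of_not_finiteExtent hT hc h
      have hcan := isCanon_periodicRoot hT hc (hz _)
      refine Or.inr ⟨_, hcan.1, hcan.2.1, omegaEq_Zword hcan.1.1 (fun s => ?_) hwm⟩
      obtain ⟨q, rfl⟩ := hsurj s
      rw [hmapq, nrm_of_const (hz q), (hcan.congr (hTE _ q)).canon_eq]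
  · intro a q
    refine (qc_tr hcong a (c q)).trans (congrArg qc (cv_inj ?_))
    rw [coreT_tr hR.2, hcv, hcv, rq_tr]
  · intro h a q
    have h1 : (minRep T).out a (qc (c q)) = (coreT (removeIncomplete T)).out a (c q) :=
      qc_out hcong a (c q)
    rw [h1, coreT_out, hcv, rq_out hT.prod h]

/-! ### Comparison of minimal representatives -/

theorem weaklyMinimal_of_omegaEq_Zword {T : Transducer n} {x : Word n}
    (h : OmegaEq T (Zword x)) : WeaklyMinimal T := by
  obtain ⟨f, -⟩ := h
  intro p q _
  exact f.injective rfl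

/-- Weakly minimal transducers inducing the same set of maps are ω-equal. -/
theorem omegaEq_of_range {T U : Transducer n} (hT : WeaklyMinimal T) (hU : WeaklyMinimal U)
    (h1 : ∀ p, ∃ q, hmap T p = hmap U q) (h2 : ∀ q, ∃ p, hmap T p = hmap U q) :
    OmegaEq T U := by
  choose f hf using h1
  choose g hg using h2
  exact ⟨⟨f, g, fun p => hT _ _ (by rw [hg, hf]), fun q => hU _ _ (by rw [← hf, hg])⟩, hf⟩

/-- The maps induced by the minimal representative of the core of `T` are the normal forms of
the maps induced by the core states of `T`. -/
theorem minRep_range {T : Transducer n} (hT : Good T) (f : (ℕ → A n) → ℕ → A n) :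
    (∃ s, hmap (minRep (coreT T)) s = f) ↔ ∃ q, CoreState T q ∧ nrm (hmap T q) = f := by
  obtain ⟨-, -, cls, hsurj, -, hmapc, -⟩ := minRep_spec (coreT_good hT) (coreT_isCore hT)
  constructor
  · rintro ⟨s, rfl⟩
    obtain ⟨c, rfl⟩ := hsurj s
    exact ⟨cv c, cv_core hT.2 c, by rw [hmapc, coreT_hmap hT]⟩
  · rintro ⟨q, hq, rfl⟩
    obtain ⟨c, rfl⟩ := exists_cv hq
    exact ⟨cls c, by rw [hmapc, coreT_hmap hT]⟩

/-- A nonempty relation between the states of `T` and `U` that is preserved by transitions and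
relates only states with equal normal forms reaches every core state on either side, by reading
a word that forces this state. -/
theorem omegaEq_of_sim {T U : Transducer n} (hT : Good T) (hU : Good U)
    (S : T.Q → U.Q → Prop) (hne : ∃ p q, S p q)
    (htr : ∀ a p q, S p q → S (T.tr a p) (U.tr a q))
    (hn : ∀ p q, S p q → nrm (hmap T p) = nrm (hmap U q)) :
    OmegaEq (minRep (coreT T)) (minRep (coreT U)) := by
  have hd : ∀ w p q, S p q → S (dsts T w p) (dsts U w q) := by
    intro w
    induction w with
    | nil => exact fun p q h => h
    | cons a w ih => exact fun p q h => ih _ _ (htr a p q h)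
  obtain ⟨p₀, q₀, h₀⟩ := hne
  obtain ⟨k, hk⟩ := hT.2
  obtain ⟨l, hl⟩ := hU.2
  apply omegaEq_of_range (minRep_spec (coreT_good hT) (coreT_isCore hT)).2.1
    (minRep_spec (coreT_good hU) (coreT_isCore hU)).2.1
  · intro s
    obtain ⟨p, hp, hps⟩ := (minRep_range hT _).1 ⟨s, rfl⟩
    obtain ⟨w, hw, hwp⟩ := hp.long l
    have := hn _ _ (hd w _ _ h₀)
    rw [hwp, hps] at this
    obtain ⟨t, ht⟩ := (minRep_range hU _).2 ⟨_, coreState_dsts hl hw q₀, rfl⟩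
    exact ⟨t, by rw [ht, this]⟩
  · intro s
    obtain ⟨q, hq, hqs⟩ := (minRep_range hU _).1 ⟨s, rfl⟩
    obtain ⟨w, hw, hwq⟩ := hq.long k
    have := hn _ _ (hd w _ _ h₀)
    rw [hwq, hqs] at this
    obtain ⟨t, ht⟩ := (minRep_range hT _).2 ⟨_, coreState_dsts hk hw p₀, rfl⟩
    exact ⟨t, by rw [ht, this]⟩

theorem OmegaEq.symm' {T U : Transducer n} : OmegaEq T U → OmegaEq U T :=
  fun ⟨f, h⟩ => ⟨f.symm, fun q => by rw [h, f.apply_symm_apply]⟩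

theorem OmegaEq.trans' {T U V : Transducer n} : OmegaEq T U → OmegaEq U V → OmegaEq T V :=
  fun ⟨f, h⟩ ⟨g, h'⟩ => ⟨f.trans g, fun q => by rw [h, h']; rfl⟩

/-! ### The monoid laws -/

theorem mulT_mem {T U : Transducer n} (hT : Good T) (hU : Good U) : MnMem (mulT T U) :=
  (minRep_spec (coreT_good (prodT_good hT hU)) (coreT_isCore (prodT_good hT hU))).1

theorem MnMem.good {T : Transducer n} (h : MnMem T) : Good T := ⟨h.1, h.2.1⟩

/-- Any two states of a strongly synchronizing transducer send tail equivalent inputs to tail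
equivalent outputs. -/
theorem TE.hmap {T : Transducer n} (hT : Good T) {z z' : ℕ → A n} (h : TE z z') (p q : T.Q) :
    TE (hmap T p z) (hmap T q z') := by
  obtain ⟨i, j, h⟩ := h
  obtain ⟨k, hk⟩ := hT.2
  set y := sh i z with hy
  have key : ∀ r : T.Q, TE (ShiftPaper.hmap T r y)
      (ShiftPaper.hmap T (dsts T (pre y k) p) (sh k y)) := by
    intro r
    conv_lhs => rw [← app_pre_sh y k]
    rw [hmap_app hT.prod, hk (pre y k) (pre_length _ _) p r]
    exact TE.app _ _
  have h1 : TE (ShiftPaper.hmap T p z) (ShiftPaper.hmap T (dsts T (pre z i) p) y) := by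
    conv_lhs => rw [← app_pre_sh z i]
    rw [hmap_app hT.prod]
    exact TE.app _ _
  have h2 : TE (ShiftPaper.hmap T q z') (ShiftPaper.hmap T (dsts T (pre z' j) q) y) := by
    conv_lhs => rw [← app_pre_sh z' j]
    rw [hmap_app hT.prod, ← h]
    exact TE.app _ _
  exact h1.trans ((key _).trans ((key _).symm.trans h2.symm))

/-- The value of a constant map induced by a core state is tail equivalent to its canonical
point. -/
theorem TE_canon {T : Transducer n} (hT : Good T) (hc : IsCore T) (q : T.Q) {z : ℕ → A n}
    (hz : ∀ x, hmap T q x = z) : TE z (canon z) := by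
  have h : ¬ ∀ q, FiniteExtent T q := fun h => by
    obtain ⟨j, x, y, hxy⟩ := h q
    rw [hz, hz] at hxy; exact hxy rfl
  obtain ⟨z', hz', hTE⟩ := const_of_not_finiteExtent hT hc h
  have hcan := (isCanon_periodicRoot hT hc (hz' _)).congr (hTE _ q)
  have hzz : z' q = z := by rw [← hz' q fun _ => default, hz]
  rw [hzz] at hcan
  rw [hcan.canon_eq]
  exact hcan.2.2.symm

/-- The states of the product `T U` as classes of core states of `T * U`. -/
theorem mulT_spec {T U : Transducer n} (hT : Good T) (hU : Good U) :
    ∃ cls : (coreT (prodT T U)).Q → (mulT T U).Q,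
      (∀ a c, (mulT T U).tr a (cls c) = cls ((coreT (prodT T U)).tr a c)) ∧
      (∀ c, ShiftPaper.hmap (mulT T U) (cls c) =
        nrm (ShiftPaper.hmap (coreT (prodT T U)) c)) ∧
      ((∀ c, FiniteExtent (coreT (prodT T U)) c) → ∀ a c,
        extentWord (coreT (prodT T U)) c ++ (mulT T U).out a (cls c) =
          (coreT (prodT T U)).out a c ++
            extentWord (coreT (prodT T U)) ((coreT (prodT T U)).tr a c)) := by
  obtain ⟨-, -, cls, -, h⟩ :=
    minRep_spec (coreT_good (prodT_good hT hU)) (coreT_isCore (prodT_good hT hU))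
  exact ⟨cls, h⟩

/-- Minimizing the left factor does not change the minimal representative of a product. -/
theorem mulT_left {T U V : Transducer n} (hT : Good T) (hU : Good U) (hV : Good V) :
    OmegaEq (mulT T (prodT U V)) (mulT (mulT T U) V) := by
  have hTU := prodT_good hT hU
  have hUV := prodT_good hU hV
  have hC := coreT_good hTU
  have hCc := coreT_isCore hTU
  have hM := (mulT_mem hT hU).good
  obtain ⟨cls, hclstr, hclsmap, hclsout⟩ := mulT_spec hT hU
  have hmap3 : ∀ p q v x, hmap (prodT T (prodT U V)) (pr p (pr q v)) x =
      hmap V v (hmap (prodT T U) (pr p q) x) := fun p q v x => by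
    rw [prodT_hmap hT hUV, prodT_hmap hU hV, prodT_hmap hT hU]
  have tr3 : ∀ a p q v, (prodT T (prodT U V)).tr a (pr p (pr q v)) =
      pr (T.tr a p) (pr (dsts U (T.out a p) q)
        (dsts V (outs U (T.out a p) q) v)) := fun a p q v => by
    rw [prodT_tr, prodT_dsts]
  obtain ⟨s₀, hs₀⟩ := exists_coreState hTU.2
  obtain ⟨c₀, hc₀⟩ := exists_cv hs₀
  obtain ⟨p₀, q₀, rfl⟩ := exists_pr s₀
  have v₀ := Classical.choice V.ne
  have hctr : ∀ a p q (c : (coreT (prodT T U)).Q), cv c = pr p q →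
      cv ((coreT (prodT T U)).tr a c) = pr (T.tr a p) (dsts U (T.out a p) q) :=
    fun a p q c hc => by rw [coreT_tr hTU.2, hc, prodT_tr]
  by_cases hfin : ∀ c, FiniteExtent (coreT (prodT T U)) c
  · -- the state `(p, q, v)` corresponds to `([(p, q)], v')` with `v'` reached from `v` by
    -- reading `Λ(ε, (p, q))`
    refine omegaEq_of_sim (prodT_good hT hUV) (prodT_good hM hV)
      (fun s t => ∃ p q v c, s = pr p (pr q v) ∧ cv c = pr p q ∧
        t = pr (T := mulT T U) (cls c) (dsts V (extentWord _ c) v))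
      ⟨_, _, p₀, q₀, v₀, c₀, rfl, hc₀, rfl⟩ ?_ ?_
    · rintro a _ _ ⟨p, q, v, c, rfl, hc, rfl⟩
      refine ⟨_, _, _, (coreT (prodT T U)).tr a c, tr3 a p q v, hctr a p q c hc, ?_⟩
      have hout : extentWord _ c ++ (mulT T U).out a (cls c) =
          outs U (T.out a p) q ++ extentWord _ ((coreT (prodT T U)).tr a c) := by
        have := hclsout hfin a c
        rwa [coreT_out a c, hc, prodT_out] at this
      rw [prodT_tr, ← dsts_append, ← dsts_append, hout, hclstr]
    · rintro _ _ ⟨p, q, v, c, rfl, hc, rfl⟩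
      have h1 : hmap (prodT T (prodT U V)) (pr p (pr q v)) = fun x =>
          app (outs V (extentWord _ c) v) (hmap (prodT (mulT T U) V)
            (pr (cls c) (dsts V (extentWord _ c) v)) x) := by
        funext x
        rw [hmap3, ← hc, ← coreT_hmap hTU, hmap_eq_app_nrm (hfin c), hmap_app hV.prod,
          prodT_hmap hM hV, hclsmap]
      rw [h1, nrm_app]
  · obtain ⟨z, hz, -⟩ := const_of_not_finiteExtent hC hCc hfin
    refine omegaEq_of_sim (prodT_good hT hUV) (prodT_good hM hV)
      (fun s t => ∃ p q v c v', s = pr p (pr q v) ∧ cv c = pr p q ∧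
        t = pr (T := mulT T U) (cls c) v')
      ⟨_, _, p₀, q₀, v₀, c₀, v₀, rfl, hc₀, rfl⟩ ?_ ?_
    · rintro a _ _ ⟨p, q, v, c, v', rfl, hc, rfl⟩
      refine ⟨_, _, _, (coreT (prodT T U)).tr a c,
        dsts V ((mulT T U).out a (cls c)) v', tr3 a p q v, hctr a p q c hc, ?_⟩
      rw [prodT_tr, hclstr]
    · rintro _ _ ⟨p, q, v, c, v', rfl, hc, rfl⟩
      have h1 : ∀ x, hmap (prodT T (prodT U V)) (pr p (pr q v)) x = hmap V v (z c) := fun x => by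
        rw [hmap3, ← hc, ← coreT_hmap hTU, hz]
      have h2 : ∀ x, hmap (prodT (mulT T U) V) (pr (cls c) v') x = hmap V v' (canon (z c)) :=
        fun x => by rw [prodT_hmap hM hV, hclsmap, nrm_of_const (hz c)]
      rw [nrm_of_const h1, nrm_of_const h2,
        canon_congr (TE.hmap hV (TE_canon hC hCc c (hz c)) v v')]

/-- Minimizing the right factor does not change the minimal representative of a product. -/
theorem mulT_right {T U V : Transducer n} (hT : Good T) (hU : Good U) (hV : Good V) :
    OmegaEq (mulT T (prodT U V)) (mulT T (mulT U V)) := by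
  have hUV := prodT_good hU hV
  have hC := coreT_good hUV
  have hCc := coreT_isCore hUV
  have hM := (mulT_mem hU hV).good
  obtain ⟨cls, hclstr, hclsmap, -⟩ := mulT_spec hU hV
  have hclsd : ∀ w c, dsts (mulT U V) w (cls c) = cls (dsts (coreT (prodT U V)) w c) := by
    intro w
    induction w with
    | nil => exact fun c => rfl
    | cons a w ih => exact fun c => (congrArg (dsts (mulT U V) w) (hclstr a c)).trans (ih _)
  obtain ⟨s₀, hs₀⟩ := exists_coreState hUV.2
  obtain ⟨c₀, -⟩ := exists_cv hs₀
  refine omegaEq_of_sim (prodT_good hT hUV) (prodT_good hT hM)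
    (fun s t => ∃ p c, s = pr p (cv c) ∧ t = pr (U := mulT U V) p (cls c))
    ⟨_, _, Classical.choice T.ne, c₀, rfl, rfl⟩ ?_ ?_
  · rintro a _ _ ⟨p, c, rfl, rfl⟩
    refine ⟨T.tr a p, dsts (coreT (prodT U V)) (T.out a p) c, ?_, ?_⟩
    · rw [prodT_tr, coreT_dsts hUV.2]
    · rw [prodT_tr, hclsd]
  · rintro _ _ ⟨p, c, rfl, rfl⟩
    have h0 : ∀ x, hmap (prodT T (mulT U V)) (pr p (cls c)) x =
        nrm (hmap (coreT (prodT U V)) c) (hmap T p x) := fun x => by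
      rw [prodT_hmap hT hM, hclsmap]
    have h0' : ∀ x, hmap (prodT T (prodT U V)) (pr p (cv c)) x =
        hmap (coreT (prodT U V)) c (hmap T p x) := fun x => by
      rw [prodT_hmap hT hUV, coreT_hmap hUV]
    by_cases hfin : FiniteExtent (coreT (prodT U V)) c
    · have h1 : hmap (prodT T (prodT U V)) (pr p (cv c)) = fun x =>
          app (extentWord _ c) (hmap (prodT T (mulT U V)) (pr p (cls c)) x) := by
        funext x
        rw [h0', hmap_eq_app_nrm hfin, h0]
      rw [h1, nrm_app]
    · obtain ⟨z, hz⟩ := const_of_not_dis hfin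
      rw [nrm_of_const (z := z) fun x => by rw [h0', hz],
        nrm_of_const (z := canon z) fun x => by rw [h0, nrm_of_const hz]]
      exact congrArg (fun y _ => y) (canon_congr (TE_canon hC hCc c hz))

/-- The maps induced by the states of an element of `M_n` are in normal form. -/
theorem MnMem.nrm_hmap {T : Transducer n} (h : MnMem T) (q : T.Q) :
    nrm (ShiftPaper.hmap T q) = ShiftPaper.hmap T q := by
  rcases h.2.2.2 with ⟨h, -⟩ | ⟨x, hx, hmin, f, hf⟩
  · exact nrm_of_zero (h q)
  · have h1 : ShiftPaper.hmap T q = fun _ => pw x := by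
      rw [hf, hmap_of_out_eq (T := Zword x) hx.1 (fun _ _ => rfl)]
    have hcan : IsCanon (pw x) x := ⟨hx, hmin, TE.refl _⟩
    rw [h1, nrm_of_const (fun _ => rfl), hcan.canon_eq]

theorem MnMem.weaklyMinimal {T : Transducer n} (h : MnMem T) : WeaklyMinimal T := by
  rcases h.2.2.2 with ⟨-, h⟩ | ⟨x, -, -, h⟩
  · exact h
  · exact weaklyMinimal_of_omegaEq_Zword h

theorem minRep_coreT_omegaEq {T : Transducer n} (h : MnMem T) :
    OmegaEq (minRep (coreT T)) T := by
  apply omegaEq_of_range (minRep_spec (coreT_good h.good) (coreT_isCore h.good)).2.1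
    h.weaklyMinimal
  · intro s
    obtain ⟨q, -, hq⟩ := (minRep_range h.good _).1 ⟨s, rfl⟩
    exact ⟨q, by rw [← hq, h.nrm_hmap]⟩
  · intro q
    exact (minRep_range h.good _).2 ⟨q, h.2.2.1 q, h.nrm_hmap q⟩

theorem oneT_outs (w : Word n) (q : (oneT : Transducer n).Q) : outs oneT w q = w := by
  induction w with
  | nil => rfl
  | cons a w ih => exact congrArg (a :: ·) ih

theorem oneT_mem : MnMem (oneT : Transducer n) := by
  have hc : CircuitsNonempty (oneT : Transducer n) := fun q w hw _ => by rwa [oneT_outs]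
  have hmap_one : ∀ q : (oneT : Transducer n).Q, hmap oneT q = fun x => x := fun q =>
    hmap_unique (productive_of_circuits hc) (fun _ x => x) (fun _ _ _ => rfl) q
  refine ⟨hc, ⟨0, fun _ _ _ _ => rfl⟩, fun q => ⟨0, [], fun _ _ _ _ => rfl, rfl, fun _ => rfl⟩,
    Or.inl ⟨fun q => ⟨fun _ => 0, fun _ => 1, ?_⟩, fun _ _ _ => rfl⟩⟩
  rw [hmap_one]
  exact zero_ne_one

theorem oneT_hmap (q : (oneT : Transducer n).Q) : hmap oneT q = fun x => x :=
  hmap_unique (productive_of_circuits oneT_mem.1) (fun _ x => x) (fun _ _ _ => rfl) q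

theorem one_mulT {T : Transducer n} (h : MnMem T) : OmegaEq (mulT oneT T) T := by
  refine OmegaEq.trans' (omegaEq_of_sim (prodT_good oneT_mem.good h.good) h.good
    (fun s q => ∃ e, s = pr e q) ⟨_, Classical.choice T.ne, PUnit.unit, rfl⟩ ?_ ?_)
    (minRep_coreT_omegaEq h)
  · rintro a _ q ⟨e, rfl⟩
    exact ⟨_, rfl⟩
  · rintro _ q ⟨e, rfl⟩
    rw [prodT_hmap oneT_mem.good h.good, oneT_hmap]

theorem mulT_one {T : Transducer n} (h : MnMem T) : OmegaEq (mulT T oneT) T := by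
  refine OmegaEq.trans' (omegaEq_of_sim (prodT_good h.good oneT_mem.good) h.good
    (fun s q => ∃ e, s = pr q e) ⟨_, Classical.choice T.ne, PUnit.unit, rfl⟩ ?_ ?_)
    (minRep_coreT_omegaEq h)
  · rintro a _ q ⟨e, rfl⟩
    exact ⟨_, rfl⟩
  · rintro _ q ⟨e, rfl⟩
    rw [prodT_hmap h.good oneT_mem.good, oneT_hmap]


/-- The set `M_n` of minimal strongly synchronizing core transducers,
together with the binary operation `(T, U) ↦ TU` (the minimal representative of the core
of `T * U`) is a monoid: the operation is closed on `M_n` and associative, with identity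
the single-state identity transducer.  (Equality in `M_n` is ω-equality.) -/
theorem Mn_monoid (n : ℕ) :
    (∀ T U : Transducer n, MnMem T → MnMem U → MnMem (mulT T U)) ∧
    (∀ T U V : Transducer n, MnMem T → MnMem U → MnMem V →
      OmegaEq (mulT (mulT T U) V) (mulT T (mulT U V))) ∧
    MnMem (oneT : Transducer n) ∧
    (∀ T : Transducer n, MnMem T → OmegaEq (mulT oneT T) T ∧ OmegaEq (mulT T oneT) T) := by
  refine ⟨fun T U hT hU => mulT_mem hT.good hU.good, fun T U V hT hU hV => ?_, oneT_mem,
    fun T hT => ⟨one_mulT hT, mulT_one hT⟩⟩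
  exact (mulT_left hT.good hU.good hV.good).symm'.trans'
    (mulT_right hT.good hU.good hV.good)


end ShiftPaper
end
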